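/- arXiv:1704.02204 — 3 statements merged into one kernel-verified Lean document; each statement's English description precedes it below -/
import Mathlib

section
/- Let α be a finite nonempty type with |α| = D, let e ≥ 1, let g be a permutation of α and let h : α → Perm(Fin e). Define the permutation σ of α × Fin(e) by σ(a, t) = (g(a), h(g(a))(t)). Then σ is a single cycle of length D·e if and only if g is a single cycle of length D and, for every a ∈ α, the product h(g^{-1}(a))·h(g^{-2}(a))·⋯·h(g^{-D}(a)) (composition of permutations, taken in this order) is a single cycle of length e in Perm(Fin e). -/
/-- A permutation of a finite set is a single cycle through all the points of the set iff
the cyclic group it generates acts transitively. -/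
def IsFullCycle {α : Type*} (σ : Equiv.Perm α) : Prop :=
  ∀ x y : α, ∃ k : ℕ, (σ ^ k) x = y

/-!
The projection to `α` semiconjugates `σ` to `g`, so `σ` is a full cycle exactly when `g` is one and
the powers of `σ` that preserve a fibre are transitive on it. When `g` is a full cycle on `D`
points, these powers are those of `σ ^ D`, and on the fibre over `g⁻¹ a` the permutation `σ ^ D` is
`h (g⁻¹ a) * h (g⁻² a) * ⋯ * h (g⁻ᴰ a)`.
-/

open Equiv Function

namespace IsFullCycle

variable {α : Type*} {g : Perm α}

theorem minimalPeriod_eq_natCard (hg : IsFullCycle g) (a : α) : minimalPeriod g a = Nat.card α := by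
  have orbit_eq_univ : MulAction.orbit (Subgroup.zpowers g) a = Set.univ :=
    Set.eq_univ_of_forall fun b =>
      let ⟨k, hk⟩ := hg a b
      ⟨⟨g ^ k, Subgroup.npow_mem_zpowers g k⟩, hk⟩
  calc minimalPeriod g a
      = Nat.card (MulAction.orbit (Subgroup.zpowers g) a) := by
        rw [Nat.card_congr (MulAction.orbitZPowersEquiv g a), Nat.card_zmod]; rfl
    _ = Nat.card α := by rw [orbit_eq_univ, Nat.card_univ]

theorem pow_apply_eq_self_iff (hg : IsFullCycle g) {k : ℕ} {a : α} :
    (g ^ k) a = a ↔ Nat.card α ∣ k := by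
  rw [← hg.minimalPeriod_eq_natCard a, ← isPeriodicPt_iff_minimalPeriod_dvd,
    ← Perm.iterate_eq_pow, IsPeriodicPt, IsFixedPt]

theorem pow_natCard_eq_one (hg : IsFullCycle g) : g ^ Nat.card α = 1 :=
  Equiv.ext fun _ => hg.pow_apply_eq_self_iff.2 dvd_rfl

end IsFullCycle

section Semiconj

variable {X α : Type*} {σ : Perm X} {g : Perm α} {p : X → α}

theorem semiconj_perm_pow (h : Semiconj p σ g) (k : ℕ) : Semiconj p ⇑(σ ^ k) ⇑(g ^ k) := by
  simpa only [Perm.iterate_eq_pow] using h.iterate_right k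

theorem IsFullCycle.of_semiconj (hσ : IsFullCycle σ) (h : Semiconj p σ g) (hp : Surjective p) :
    IsFullCycle g := by
  refine hp.forall₂.2 fun x y => ?_
  obtain ⟨k, rfl⟩ := hσ x y
  exact ⟨k, (semiconj_perm_pow h k x).symm⟩

theorem isFullCycle_iff_of_semiconj (h : Semiconj p σ g) (hp : Surjective p) :
    IsFullCycle σ ↔ IsFullCycle g ∧
      ∀ x y, p x = p y → ∃ m : ℕ, ((σ ^ Nat.card α) ^ m) x = y := by
  constructor
  · intro hσ
    have hg : IsFullCycle g := hσ.of_semiconj h hp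
    refine ⟨hg, fun x y hxy => ?_⟩
    obtain ⟨k, rfl⟩ := hσ x y
    rw [(semiconj_perm_pow h k).eq, eq_comm, hg.pow_apply_eq_self_iff] at hxy
    obtain ⟨m, rfl⟩ := hxy
    exact ⟨m, by rw [pow_mul]⟩
  · rintro ⟨hg, hfibre⟩ x y
    obtain ⟨k, hk⟩ := hg (p x) (p y)
    obtain ⟨m, hm⟩ := hfibre ((σ ^ k) x) y (by rw [(semiconj_perm_pow h k).eq, hk])
    exact ⟨Nat.card α * m + k, by rw [pow_add, pow_mul, Perm.mul_apply, hm]⟩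

end Semiconj

section Wreath

variable {α β : Type*} (g : Perm α) (h : α → Perm β)

/-- The permutation `(a, t) ↦ (g a, h (g a) t)` of `α × β`, that is, the element `(g, (h_r))` of the
wreath product `Perm α ≀ Perm β` in its imprimitive action. -/
def wreathPerm : Perm (α × β) :=
  prodShear g fun a => h (g a)

/-- The product `h a * h (g⁻¹ a) * ⋯ * h (g⁻⁽ⁿ⁻¹⁾ a)` along the backward `g`-orbit of `a`: the
permutation of `β` by which `wreathPerm g h ^ n` carries the fibre over `g⁻ⁿ a` to the fibre over
`a`. -/
def wreathCocycle (n : ℕ) (a : α) : Perm β :=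
  ((List.range n).map fun i => h ((g⁻¹ ^ i) a)).prod

theorem wreathCocycle_succ (n : ℕ) (a : α) :
    wreathCocycle g h (n + 1) a = wreathCocycle g h n a * h ((g⁻¹ ^ n) a) := by
  simp [wreathCocycle, List.range_succ]

theorem wreathPerm_pow_apply (n : ℕ) (a : α) (t : β) :
    (wreathPerm g h ^ n) ((g⁻¹ ^ n) a, t) = (a, wreathCocycle g h n a t) := by
  induction n generalizing t with
  | zero => rfl
  | succ n ih =>
    have apply_fibre : wreathPerm g h ((g⁻¹ ^ (n + 1)) a, t) =
        ((g⁻¹ ^ n) a, h ((g⁻¹ ^ n) a) t) := by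
      simp [wreathPerm, pow_succ']
    rw [pow_succ, Perm.mul_apply, apply_fibre, ih, wreathCocycle_succ, Perm.mul_apply]

variable {g}

theorem wreathPerm_pow_pow_apply {n : ℕ} (hg : g ^ n = 1) (m : ℕ) (a : α) (t : β) :
    ((wreathPerm g h ^ n) ^ m) (a, t) = (a, (wreathCocycle g h n a ^ m) t) := by
  have apply_pow (t : β) : (wreathPerm g h ^ n) (a, t) = (a, wreathCocycle g h n a t) := by
    simpa [hg] using wreathPerm_pow_apply g h n a t
  induction m with
  | zero => rfl
  | succ m ih => rw [pow_succ', Perm.mul_apply, ih, apply_pow, pow_succ', Perm.mul_apply]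

variable (g)

theorem isFullCycle_wreathPerm_iff [Nonempty β] :
    IsFullCycle (wreathPerm g h) ↔
      IsFullCycle g ∧ ∀ a, IsFullCycle (wreathCocycle g h (Nat.card α) a) := by
  have fst_semiconj : Semiconj Prod.fst (wreathPerm g h) g := fun _ => rfl
  rw [isFullCycle_iff_of_semiconj fst_semiconj Prod.fst_surjective]
  refine and_congr_right fun hg => ?_
  have pow_apply := wreathPerm_pow_pow_apply h hg.pow_natCard_eq_one
  constructor
  · intro hfibre a s t
    simpa [pow_apply] using hfibre (a, s) (a, t) rfl
  · rintro hcocycle ⟨a, s⟩ ⟨_, t⟩ rfl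
    simpa [pow_apply] using hcocycle a s t

end Wreath

theorem stmt9_general {α β : Type*} [Nonempty β] (g : Perm α) (h : α → Perm β)
    (σ : Perm (α × β)) (hσ : ∀ a t, σ (a, t) = (g a, h (g a) t)) :
    IsFullCycle σ ↔ IsFullCycle g ∧ ∀ a : α,
      IsFullCycle ((List.range (Nat.card α)).map fun i => h ((g⁻¹ ^ (i + 1)) a)).prod := by
  obtain rfl : σ = wreathPerm g h := Equiv.ext fun ⟨a, t⟩ => hσ a t
  rw [isFullCycle_wreathPerm_iff, ← (g⁻¹ : Perm α).forall_congr_right]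
  simp only [wreathCocycle, pow_succ, Perm.mul_apply]

theorem stmt9 {α : Type*} [Fintype α] [Nonempty α] (D : ℕ) (hD : Fintype.card α = D)
    (e : ℕ) (he : 1 ≤ e) (g : Equiv.Perm α) (h : α → Equiv.Perm (Fin e))
    (σ : Equiv.Perm (α × Fin e))
    (hσ : ∀ (a : α) (t : Fin e), σ (a, t) = (g a, h (g a) t)) :
    IsFullCycle σ ↔ IsFullCycle g ∧ ∀ a : α,
      IsFullCycle (((List.range D).map (fun i => h ((g⁻¹ ^ (i + 1)) a))).prod) := by
  have : Nonempty (Fin e) := Fin.pos_iff_nonempty.1 he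
  simpa only [← hD, Nat.card_eq_fintype_card] using stmt9_general g h σ hσ
end

section
/- (Odoni.) Let F be a field of characteristic 0 and let f ∈ F[x] be monic and squarefree of degree d ≥ 1 with Galois group G over F. Let ℓ ≥ 2, let t_1,…,t_ℓ be indeterminates over F, and let g(x) = x^ℓ + t_1 x^{ℓ−1} + ⋯ + t_ℓ ∈ F(t_1,…,t_ℓ)[x]. Then the Galois group of f∘g over the rational function field F(t_1,…,t_ℓ) is finite of order |G|·(ℓ!)^d (the order of the wreath product G ≀ S_ℓ). -/
open Polynomial

/-!
Let `E` be the splitting field of `f` over `F`, with roots `α` of `f` in `E`, and let `g` be the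
generic monic polynomial of degree `ℓ`. Over `E(t)` the composite `f ∘ g` factors as `∏ (g - α)`,
and each factor has Galois group `S_ℓ`, because its coefficients are, up to sign and a shift of the
constant one, the elementary symmetric polynomials in its roots. A homomorphism from a product of
symmetric groups to `{±1}` is a product of signs, and a normal subgroup of `S_ℓ` containing an odd
permutation is everything; so the Galois group of the product is all of `S_ℓ ^ d` as soon as no
nonempty product of the discriminants of the `g - α` is a square. This is checked on the
specialization `x ^ ℓ - ℓ s x ^ (ℓ - 1) + (t - α)`, whose discriminant has a simple zero at
`t = α + (ℓ - 1) ^ (ℓ - 1) s ^ ℓ`; for a suitable integer `s` no other factor vanishes there.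
Finally `[E(t) : F(t)] = [E : F]`, which contributes the factor `|G|`.
-/

section Perm

open Equiv Equiv.Perm

variable {α : Type*} [Fintype α] [DecidableEq α]

theorem alternatingGroup_le_of_normal_of_sq_ne_one {N : Subgroup (Perm α)} [hN : N.Normal]
    {σ : Perm α} (hσ : σ ∈ N) (hsq : σ ^ 2 ≠ 1) : alternatingGroup α ≤ N := by
  obtain ⟨a, ha⟩ : ∃ a, σ (σ a) ≠ a := by
    by_contra! h
    exact hsq (Perm.ext fun a => by simpa [sq] using h a)
  have ha' : σ a ≠ a := fun h => ha (by rw [h, h])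
  have hmem : swap (σ a) a * swap (σ a) (σ (σ a)) ∈ N := by
    have hconj := N.mul_mem (hN.conj_mem _ hσ (swap (σ a) a)) (N.inv_mem hσ)
    rwa [mul_assoc, mul_assoc, swap_inv, ← mul_assoc σ, ← swap_apply_apply,
      swap_comm (σ (σ a))] at hconj
  have h3 := isThreeCycle_swap_mul_swap_same ha' (σ.injective.ne ha'.symm) ha.symm
  rw [← closure_three_cycles_eq_alternating, Subgroup.closure_le]
  intro τ hτ
  obtain ⟨c, rfl⟩ := isConj_iff.1 (isConj_iff_cycleType_eq.2 (h3.trans hτ.symm))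
  exact hN.conj_mem _ hmem c

theorem isSwap_of_sq_eq_one_of_sign_eq_neg_one (hα : Fintype.card α < 6) {σ : Perm α}
    (hsq : σ ^ 2 = 1) (hσ : sign σ = -1) : σ.IsSwap := by
  have hcycle := cycleType_of_pow_prime_eq_one hsq
  have hodd : Odd σ.cycleType.card := by
    rw [sign_of_cycleType', hcycle] at hσ
    simpa [neg_one_pow_eq_neg_one_iff_odd] using hσ
  have hle := σ.sum_cycleType_le
  rw [hcycle, Multiset.sum_replicate, smul_eq_mul] at hle
  have hcard : σ.cycleType.card = 1 := by grind
  rw [isSwap_iff_cycleType, hcycle, hcard, Multiset.replicate_one]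

theorem normal_eq_top_of_sign_eq_neg_one {N : Subgroup (Perm α)} [hN : N.Normal] {σ : Perm α}
    (hσ : σ ∈ N) (hsign : sign σ = -1) : N = ⊤ := by
  have htop_of_alternating (h : alternatingGroup α ≤ N) : N = ⊤ := by
    refine eq_top_iff.2 fun τ _ => ?_
    rcases Int.units_eq_one_or (sign τ) with hτ | hτ
    · exact h hτ
    · have hmem : τ * σ⁻¹ ∈ N := h (mem_alternatingGroup.2 (by simp [hτ, hsign]))
      simpa using N.mul_mem hmem hσ
  by_cases hsq : σ ^ 2 = 1
  · by_cases hα : 5 ≤ Nat.card α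
    · have hne : σ ≠ 1 := by rintro rfl; simp at hsign
      exact htop_of_alternating (alternatingGroup_le_of_normal hα
        ((Subgroup.nontrivial_iff_exists_ne_one N).2 ⟨σ, hσ, hne⟩))
    · obtain ⟨x, y, hxy, rfl⟩ := isSwap_of_sq_eq_one_of_sign_eq_neg_one
        (by rw [← Nat.card_eq_fintype_card]; omega) hsq hsign
      rw [eq_top_iff, ← closure_isSwap, Subgroup.closure_le]
      rintro _ ⟨a, b, hab, rfl⟩
      obtain ⟨c, hc⟩ := isConj_iff.1 (isConj_swap hxy hab)
      exact hc ▸ hN.conj_mem _ hσ c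
  · exact htop_of_alternating (alternatingGroup_le_of_normal_of_sq_ne_one hσ hsq)

theorem monoidHom_perm_eq_one_or_eq_sign (χ : Perm α →* ℤˣ) : χ = 1 ∨ χ = sign := by
  by_cases hχ : Function.Surjective χ
  · exact Or.inr (eq_sign_of_surjective_hom hχ)
  refine Or.inl (MonoidHom.ext fun σ => ?_)
  by_contra hσ
  have hneg : χ σ = -1 := (Int.units_eq_one_or _).resolve_left hσ
  refine hχ fun u => ?_
  rcases Int.units_eq_one_or u with rfl | rfl
  exacts [⟨1, map_one χ⟩, ⟨σ, hneg⟩]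

theorem exists_eq_prod_sign {ι : Type*} [Finite ι] {β : ι → Type*} [∀ i, Fintype (β i)]
    [∀ i, DecidableEq (β i)] (χ : (∀ i, Perm (β i)) →* ℤˣ) :
    ∃ S : Finset ι, ∀ p, χ p = ∏ i ∈ S, sign (p i) := by
  classical
  cases nonempty_fintype ι
  set S : Finset ι := {i | χ.comp (MonoidHom.mulSingle _ i) = sign} with hS
  suffices χ = ∏ i ∈ S, sign.comp (Pi.evalMonoidHom _ i) from
    ⟨S, fun p => by simpa using DFunLike.congr_fun this p⟩
  refine MonoidHom.pi_ext fun i σ => ?_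
  have hother : ∀ j ∈ S, j ≠ i → sign ((Pi.mulSingle i σ : ∀ i, Perm (β i)) j) = 1 := by
    intro j _ hj
    rw [Pi.mulSingle_eq_of_ne hj, map_one]
  change χ.comp (MonoidHom.mulSingle _ i) σ = _
  simp only [MonoidHom.finsetProd_apply, MonoidHom.comp_apply, Pi.evalMonoidHom_apply]
  by_cases hi : i ∈ S
  · rw [Finset.prod_eq_single_of_mem i hi hother, Pi.mulSingle_eq_same]
    exact DFunLike.congr_fun (Finset.mem_filter.1 hi).2 σ
  · rw [Finset.prod_eq_one fun j hj => hother j hj (ne_of_mem_of_not_mem hj hi)]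
    have hne : χ.comp (MonoidHom.mulSingle _ i) ≠ sign := by simpa [hS] using hi
    exact DFunLike.congr_fun ((monoidHom_perm_eq_one_or_eq_sign _).resolve_right hne) σ

theorem surjective_prod_of_sign_comp_ne {Γ G : Type*} [Group Γ] [Group G] {φ : Γ →* G}
    {ψ : Γ →* Perm α} (hφ : Function.Surjective φ) (hψ : Function.Surjective ψ)
    (hχ : ∀ χ : G →* ℤˣ, χ.comp φ ≠ sign.comp ψ) : Function.Surjective (φ.prod ψ) := by
  have htop : φ.ker.map ψ = ⊤ := by
    have : (φ.ker.map ψ).Normal := Subgroup.Normal.map inferInstance ψ hψ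
    by_contra hne
    have hker : φ.ker ≤ (sign.comp ψ).ker := fun γ hγ =>
      (Int.units_eq_one_or _).resolve_right fun hs =>
        hne (normal_eq_top_of_sign_eq_neg_one (Subgroup.mem_map_of_mem ψ hγ) hs)
    exact hχ _ (φ.liftOfRightInverse_comp _ (Function.rightInverse_surjInv hφ) ⟨_, hker⟩)
  rintro ⟨g, σ⟩
  obtain ⟨γ, rfl⟩ := hφ g
  obtain ⟨δ, hδ, hδσ⟩ : σ * (ψ γ)⁻¹ ∈ φ.ker.map ψ := htop ▸ Subgroup.mem_top _
  exact ⟨δ * γ, by simp [MonoidHom.mem_ker.1 hδ, hδσ]⟩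

theorem surjective_pi_of_prod_sign_ne_one {ι Γ : Type*} [Finite ι] [Group Γ] {β : ι → Type*}
    [∀ i, Fintype (β i)] [∀ i, DecidableEq (β i)] {φ : ∀ i, Γ →* Perm (β i)}
    (hφ : ∀ i, Function.Surjective (φ i))
    (hsign : ∀ S : Finset ι, S.Nonempty → ∃ γ, ∏ i ∈ S, sign (φ i γ) ≠ 1) :
    Function.Surjective (MonoidHom.pi φ) := by
  classical
  cases nonempty_fintype ι
  suffices H : ∀ T : Finset ι, Function.Surjective (MonoidHom.pi fun i : T => φ i) by
    intro p
    obtain ⟨γ, hγ⟩ := H Finset.univ fun i => p i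
    exact ⟨γ, funext fun i => congr_fun hγ ⟨i, Finset.mem_univ i⟩⟩
  intro T
  induction T using Finset.induction_on with
  | empty => exact fun p => ⟨1, Subsingleton.elim _ _⟩
  | insert i T hi ih =>
    have hχ (χ : (∀ j : T, Perm (β j)) →* ℤˣ) :
        χ.comp (MonoidHom.pi fun j : T => φ j) ≠ sign.comp (φ i) := by
      intro h
      obtain ⟨S, hS⟩ := exists_eq_prod_sign χ
      have hiS : i ∉ S.map (Function.Embedding.subtype _) := by simp [hi]
      obtain ⟨γ, hγ⟩ := hsign (insert i (S.map (Function.Embedding.subtype _))) (by simp)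
      have hγS : ∏ j ∈ S, sign (φ j γ) = sign (φ i γ) := by
        simpa [hS] using DFunLike.congr_fun h γ
      rw [Finset.prod_insert hiS, Finset.prod_map, ← hγS] at hγ
      exact hγ (Int.units_mul_self _)
    intro p
    obtain ⟨γ, hγ⟩ := surjective_prod_of_sign_comp_ne ih (hφ i) hχ
      (fun j => p ⟨j, Finset.mem_insert_of_mem j.2⟩, p ⟨i, Finset.mem_insert_self i T⟩)
    rw [MonoidHom.prod_apply, Prod.mk.injEq] at hγ
    refine ⟨γ, funext fun ⟨j, hj⟩ => ?_⟩
    rcases Finset.mem_insert.1 hj with rfl | hjT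
    exacts [hγ.2, congr_fun hγ.1 ⟨j, hjT⟩]

end Perm

section Discriminant

theorem discr_map_of_monic {R S : Type*} [CommRing R] [CommRing S] [Nontrivial S] {p : R[X]}
    (hp : p.Monic) (φ : R →+* S) : (p.map φ).discr = φ p.discr := by
  have : Nontrivial R := φ.domain_nontrivial
  rcases p.natDegree.eq_zero_or_pos with h0 | hpos
  · rw [hp.natDegree_eq_zero.1 h0, Polynomial.map_one, ← C_1, discr_C, ← C_1, discr_C, map_one]
  have hdeg : (p.map φ).natDegree = p.natDegree := hp.natDegree_map φ
  have hφ := resultant_deriv (natDegree_pos_iff_degree_pos.1 (hdeg.symm ▸ hpos))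
  rw [hdeg, derivative_map, resultant_map_map,
    resultant_deriv (natDegree_pos_iff_degree_pos.1 hpos), hp.leadingCoeff,
    (hp.map φ).leadingCoeff] at hφ
  simp only [mul_one, map_mul, map_pow, map_neg, map_one] at hφ
  exact ((isUnit_neg_one.pow _).mul_left_cancel hφ).symm

theorem eval_derivative_prod_X_sub_C {ι R : Type*} [Fintype ι] [DecidableEq ι] [CommRing R]
    (r : ι → R) (i : ι) :
    (derivative (∏ j, (X - C (r j)))).eval (r i) = ∏ j ∈ {i}ᶜ, (r i - r j) := by
  rw [derivative_prod_finset, eval_finsetSum, Finset.sum_eq_single i]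
  · simp [eval_prod, Finset.compl_singleton]
  · intro j _ hj
    rw [eval_mul, eval_prod, Finset.prod_eq_zero (i := i) (by simp [hj.symm]) (by simp), zero_mul]
  · simp

theorem discr_prod_X_sub_C {R : Type*} [CommRing R] {n : ℕ} (r : Fin n → R) :
    (∏ i, (X - C (r i))).discr = (Matrix.vandermonde r).det ^ 2 := by
  nontriviality R
  set p := ∏ i, (X - C (r i)) with hp
  have hmonic : p.Monic := monic_prod_of_monic _ _ fun i _ => monic_X_sub_C _
  have hdeg : p.natDegree = n := by
    simp [hp, natDegree_prod_of_monic _ _ fun i _ => monic_X_sub_C (r i)]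
  obtain rfl | hn := n.eq_zero_or_pos
  · rw [hp, Finset.univ_eq_empty, Finset.prod_empty, ← C_1, discr_C, Matrix.det_isEmpty, one_pow]
  have hres : resultant p (derivative p) p.natDegree (p.natDegree - 1) =
      ∏ i, ∏ j ∈ {i}ᶜ, (r i - r j) := by
    rw [hp, resultant_prod_left _ _ _ _ (by simp) (natDegree_derivative_le _)]
    refine Finset.prod_congr rfl fun i _ => ?_
    rw [natDegree_X_sub_C, resultant_X_sub_C_left _ _ _ (natDegree_derivative_le _),
      eval_derivative_prod_X_sub_C]
  have hsign : ∏ i : Fin n, ∏ _j ∈ Finset.Ioi i, (-1 : R) = (-1) ^ (n * (n - 1) / 2) := by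
    simp only [Finset.prod_const, Fin.card_Ioi, Finset.prod_pow_eq_pow_sum]
    rw [Fin.sum_univ_eq_sum_range (fun i => n - 1 - i), Finset.sum_range_reflect (fun i => i),
      Finset.sum_range_id]
  rw [resultant_deriv (natDegree_pos_iff_degree_pos.1 (hdeg.symm ▸ hn)), hmonic.leadingCoeff,
    mul_one, hdeg, ← hsign, ← Finset.prod_prod_Ioi_mul_eq_prod_prod_off_diag fun j i => r i - r j]
    at hres
  refine (isUnit_neg_one.pow (n * (n - 1) / 2)).mul_left_cancel ?_
  simp only [← hsign, hres, Matrix.det_vandermonde, ← Finset.prod_pow, ← Finset.prod_mul_distrib]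
  exact Finset.prod_congr rfl fun i _ => Finset.prod_congr rfl fun j _ => by ring

theorem derivative_X_pow_sub_X_pow_add_C {R : Type*} [CommRing R] (m : ℕ) (s b : R) :
    derivative (X ^ (m + 2) - C ((m + 2) * s) * X ^ (m + 1) + C b) =
      C ((m + 2 : R)) * (X ^ m * (X - C ((m + 1) * s))) := by
  rw [derivative_add, derivative_sub, derivative_C_mul, derivative_X_pow, derivative_X_pow,
    derivative_C]
  simp only [map_mul, map_add, map_natCast, map_one, map_ofNat, Nat.add_sub_cancel]
  push_cast
  ring

theorem discr_X_pow_sub_X_pow_add_C {R : Type*} [CommRing R] (m : ℕ) (s b : R) :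
    (X ^ (m + 2) - C ((m + 2) * s) * X ^ (m + 1) + C b).discr =
      (-1) ^ ((m + 2) * (m + 1) / 2) *
        ((m + 2) ^ (m + 2) * b ^ m * (b - (m + 1) ^ (m + 1) * s ^ (m + 2))) := by
  nontriviality R
  set p := X ^ (m + 2) - C ((m + 2) * s) * X ^ (m + 1) + C b with hp
  have hmonic : p.Monic := by rw [hp]; monicity!
  have hdeg : p.natDegree = m + 2 := by rw [hp]; compute_degree!
  have hderiv : derivative p = _ := derivative_X_pow_sub_X_pow_add_C m s b
  have hres := resultant_deriv (natDegree_pos_iff_degree_pos.1 (by omega : 0 < p.natDegree))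
  have hsplit : m + 2 - 1 = (X ^ m : R[X]).natDegree + (X - C ((m + 1) * s)).natDegree := by
    rw [natDegree_X_pow, natDegree_X_sub_C]; rfl
  have hroot : p.eval ((m + 1) * s) = b - (m + 1) ^ (m + 1) * s ^ (m + 2) := by
    simp only [hp, eval_add, eval_sub, eval_mul, eval_pow, eval_X, eval_C, mul_pow]
    ring
  have hzero : p.coeff 0 = b := by simp [hp, coeff_zero_eq_eval_zero]
  have heven : (-1 : R) ^ ((m + 2) * m) * (-1) ^ (m + 2) = 1 := by
    rw [← pow_add]
    exact Even.neg_one_pow (by grind)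
  rw [hdeg, hmonic.leadingCoeff, hderiv, resultant_C_mul_right, hsplit,
    resultant_mul_right _ _ _ _ hdeg.le, natDegree_X_pow, natDegree_X_sub_C,
    resultant_X_pow_right _ _ _ hdeg.le, resultant_X_sub_C_right _ _ _ hdeg.le, hroot, hzero]
    at hres
  set ε : R := (-1) ^ ((m + 2) * (m + 1) / 2)
  have hε : ε * ε = 1 := by rw [← mul_pow, neg_one_mul, neg_neg, one_pow]
  linear_combination (-ε) * hres - p.discr * hε +
    ε * ((m + 2) ^ (m + 2) * b ^ m * (b - (m + 1) ^ (m + 1) * s ^ (m + 2))) * heven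

theorem not_isSquare_X_sub_C_mul {R : Type*} [CommRing R] [IsDomain R] {a : R} {q : R[X]}
    (hq : q.eval a ≠ 0) : ¬ IsSquare ((X - C a) * q) := by
  rintro ⟨r, hr⟩
  obtain ⟨s, rfl⟩ : X - C a ∣ r := (prime_X_sub_C a).dvd_of_dvd_pow ⟨q, by rw [sq, hr]⟩
  have hqs : q = (X - C a) * s ^ 2 :=
    mul_left_cancel₀ (X_sub_C_ne_zero a) (hr.trans (by ring))
  exact hq (by simp [hqs])

theorem isSquare_of_isSquare_algebraMap {R K : Type*} [CommRing R] [IsIntegrallyClosed R]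
    [Field K] [Algebra R K] [IsFractionRing R K] {a : R} (ha : IsSquare (algebraMap R K a)) :
    IsSquare a := by
  obtain ⟨k, hk⟩ := ha
  obtain ⟨b, rfl⟩ := IsIntegrallyClosed.exists_algebraMap_eq_of_isIntegral_pow (R := R) (x := k)
    two_pos (by rw [sq, ← hk]; exact isIntegral_algebraMap)
  exact ⟨b, IsFractionRing.injective R K (by rw [hk, map_mul])⟩

end Discriminant

section Generic

theorem exists_algHom_map_freeMonic_eq (R : Type*) {A : Type*} [CommRing R] [CommRing A]
    [Algebra R A] {n : ℕ} {p : A[X]} (hp : p.Monic) (hn : p.natDegree = n) :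
    ∃ φ : MvPolynomial (Fin n) R →ₐ[R] A,
      (freeMonic R n).map (φ : MvPolynomial (Fin n) R →+* A) = p :=
  ⟨(MvPolynomial.mapEquivMonic R A n).symm (.mk p hp hn),
    congrArg Subtype.val ((MvPolynomial.mapEquivMonic R A n).apply_symm_apply (.mk p hp hn))⟩

theorem monic_freeMonic_sub_C (R : Type*) [CommRing R] {n : ℕ} (hn : n ≠ 0)
    (a : MvPolynomial (Fin n) R) : (freeMonic R n - C a).Monic := by
  nontriviality R
  refine (monic_freeMonic R n).sub_of_left (degree_C_le.trans_lt ?_)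
  rw [degree_freeMonic]
  exact_mod_cast hn.bot_lt

theorem exists_natCast_forall_add_ne {E ι : Type*} [Field E] [CharZero E] (m : ℕ) (α : ι → E)
    (S : Finset ι) : ∃ s : ℕ, ∀ i ∈ S, ∀ j ∈ S, α i + (m + 1) ^ (m + 1) * s ^ (m + 2) ≠ α j := by
  classical
  have hinj : Function.Injective fun s : ℕ => ((m + 1) ^ (m + 1) * s ^ (m + 2) : E) := by
    intro s t hst
    have hpow : s ^ (m + 2) = t ^ (m + 2) := by
      exact_mod_cast mul_left_cancel₀ (pow_ne_zero _ (Nat.cast_add_one_ne_zero m)) hst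
    exact Nat.pow_left_injective (by omega) hpow
  obtain ⟨_, ⟨s, rfl⟩, hs⟩ := (Set.infinite_range_of_injective hinj).exists_notMem_finset
    ((S ×ˢ S).image fun p => α p.2 - α p.1)
  refine ⟨s, fun i hi j hj h => hs (Finset.mem_image.2 ⟨(i, j), by simp [hi, hj], ?_⟩)⟩
  rw [← h, add_sub_cancel_left]

theorem not_isSquare_prod_discr_trinomial {E ι : Type*} [Field E] [CharZero E] {m s : ℕ}
    {α : ι → E} (hα : Function.Injective α) {S : Finset ι} (hS : S.Nonempty)
    (hs : ∀ i ∈ S, ∀ j ∈ S, α i + (m + 1) ^ (m + 1) * s ^ (m + 2) ≠ α j) :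
    ¬ IsSquare (∏ i ∈ S, (X ^ (m + 2) - C ((m + 2) * (s : E[X])) * X ^ (m + 1) +
      C (X - C (α i)) : E[X][X]).discr) := by
  classical
  obtain ⟨i₀, hi₀⟩ := hS
  set v : E := (m + 1) ^ (m + 1) * s ^ (m + 2) with hv
  let w (i : ι) : E[X] :=
    (-1) ^ ((m + 2) * (m + 1) / 2) * (C ((m + 2 : E) ^ (m + 2)) * (X - C (α i)) ^ m)
  have hdiscr (i : ι) : (X ^ (m + 2) - C ((m + 2) * (s : E[X])) * X ^ (m + 1) +
      C (X - C (α i)) : E[X][X]).discr = (X - C (α i + v)) * w i := by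
    rw [discr_X_pow_sub_X_pow_add_C]
    simp only [w, hv, map_add, map_mul, map_pow, map_natCast, map_one, map_ofNat]
    ring
  have hw (i : ι) (hi : i ∈ S) : (w i).eval (α i₀ + v) ≠ 0 := by
    have hm : (m + 2 : E) ≠ 0 := by exact_mod_cast Nat.succ_ne_zero (m + 1)
    simpa [w, hm, sub_eq_zero] using fun h => absurd h (hs i₀ hi₀ i hi)
  simp only [hdiscr]
  rw [← Finset.mul_prod_erase _ _ hi₀, mul_assoc]
  refine not_isSquare_X_sub_C_mul ?_
  rw [eval_mul, eval_prod]
  refine mul_ne_zero (hw i₀ hi₀) (Finset.prod_ne_zero_iff.2 fun i hi => ?_)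
  obtain ⟨hne, hiS⟩ := Finset.mem_erase.1 hi
  rw [eval_mul]
  refine mul_ne_zero ?_ (hw i hiS)
  simpa [sub_eq_zero] using hα.ne hne.symm

theorem not_isSquare_prod_discr_freeMonic_sub_C {E ι : Type*} [Field E] [CharZero E] {n : ℕ}
    (hn : 2 ≤ n) {α : ι → E} (hα : Function.Injective α) {S : Finset ι} (hS : S.Nonempty) :
    ¬ IsSquare (∏ i ∈ S, (freeMonic E n - C (MvPolynomial.C (α i))).discr) := by
  obtain ⟨m, rfl⟩ := Nat.exists_eq_add_of_le' hn
  obtain ⟨s, hs⟩ := exists_natCast_forall_add_ne m α S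
  obtain ⟨φ, hφ⟩ := exists_algHom_map_freeMonic_eq E (n := m + 2)
    (p := (X ^ (m + 2) - C ((m + 2) * (s : E[X])) * X ^ (m + 1) + C X : E[X][X]))
    (by monicity!) (by compute_degree!)
  intro hsq
  refine not_isSquare_prod_discr_trinomial hα hS hs ?_
  suffices h : ∀ i, (X ^ (m + 2) - C ((m + 2) * (s : E[X])) * X ^ (m + 1) +
      C (X - C (α i)) : E[X][X]).discr = φ (freeMonic E (m + 2) - C (MvPolynomial.C (α i))).discr by
    simpa only [h, ← map_prod] using hsq.map φ
  intro i
  change _ = (φ : MvPolynomial (Fin (m + 2)) E →+* E[X]) _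
  rw [← discr_map_of_monic (monic_freeMonic_sub_C E (by omega) _), Polynomial.map_sub, hφ, map_C,
    RingHom.coe_coe, MvPolynomial.algHom_C, algebraMap_eq, C_sub, add_sub_assoc]

end Generic

section Symmetric

theorem natCard_gal_eq_factorial_of_forall_perm {K L ι : Type*} [Field K] [Field L] [Algebra K L]
    [Fintype ι] {p : K[X]} {x : ι → L} (hx : Function.Injective x)
    (hp : p.map (algebraMap K L) = ∏ i, (X - C (x i)))
    (hperm : ∀ q : Equiv.Perm ι, ∃ σ : L ≃ₐ[K] L, ∀ i, σ (x i) = x (q i)) :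
    Nat.card p.Gal = (Fintype.card ι).factorial := by
  classical
  have hsplits : Fact (p.map (algebraMap K L)).Splits :=
    ⟨hp ▸ Splits.prod fun i _ => Splits.X_sub_C _⟩
  have hprod : ∏ i, (X - C (x i)) ≠ 0 := Finset.prod_ne_zero_iff.2 fun i _ => X_sub_C_ne_zero _
  have hroots : p.rootSet L = Set.range x := by
    ext y
    simp [rootSet, aroots_def, hp, roots_prod _ _ hprod, eq_comm]
  let e : ι ≃ p.rootSet L := (Equiv.ofInjective x hx).trans (Equiv.setCongr hroots.symm)
  have hsurj : Function.Surjective (Gal.galActionHom p L) := by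
    intro τ
    obtain ⟨σ, hσ⟩ := hperm (e.symm.permCongr τ)
    refine ⟨Gal.restrict p L σ, Equiv.ext (e.surjective.forall.2 fun i => Subtype.ext ?_)⟩
    rw [Gal.galActionHom_restrict]
    calc σ (x i) = x (e.symm (τ (e i))) := by simpa using hσ i
      _ = τ (e i) := congrArg Subtype.val (e.apply_symm_apply _)
  rw [Nat.card_congr (Equiv.ofBijective _ ⟨Gal.galActionHom_injective p L, hsurj⟩), Nat.card_perm,
    ← Nat.card_congr e, Nat.card_eq_fintype_card]

theorem algebraicIndependent_of_forall_isIntegral_X {R ι : Type*} [Finite ι] [CommRing R]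
    [IsDomain R] {y : ι → MvPolynomial ι R}
    (hy : ∀ i, IsIntegral (Algebra.adjoin R (Set.range y)) (MvPolynomial.X i : MvPolynomial ι R)) :
    AlgebraicIndependent R y := by
  have : Algebra.IsIntegral (Algebra.adjoin R (Set.range y)) (MvPolynomial ι R) := by
    refine ⟨fun p => ?_⟩
    induction p using MvPolynomial.induction_on with
    | C a => exact isIntegral_algebraMap (x := algebraMap R (Algebra.adjoin R (Set.range y)) a)
    | add p q hp hq => exact hp.add hq
    | mul_X p i hp => exact hp.mul (hy i)
  exact (Algebra.IsAlgebraic.isTranscendenceBasis_of_lift_le_trdeg_of_finite R y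
    (by simp [MvPolynomial.trdeg_of_isDomain])).1

theorem injective_of_map_eq_prod_X_sub_C {R : Type*} [CommRing R] [IsDomain R] {n : ℕ}
    {φ : MvPolynomial (Fin n) R →ₐ[R] MvPolynomial (Fin n) R} {p : (MvPolynomial (Fin n) R)[X]}
    (hp : p.Monic) (h : p.map (φ : MvPolynomial (Fin n) R →+* MvPolynomial (Fin n) R) =
      ∏ i, (X - C (MvPolynomial.X i))) :
    Function.Injective φ := by
  have hφ : φ = MvPolynomial.aeval fun i => φ (MvPolynomial.X i) := MvPolynomial.aeval_unique φ
  have hmem (r : MvPolynomial (Fin n) R) :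
      φ r ∈ Algebra.adjoin R (Set.range fun i => φ (MvPolynomial.X i)) := by
    rw [Algebra.adjoin_range_eq_range_aeval, ← hφ]
    exact ⟨r, rfl⟩
  rw [hφ]
  refine algebraicIndependent_of_forall_isIntegral_X fun j => ?_
  refine ⟨p.map ((φ.codRestrict _ hmem : _ →ₐ[R] _) : _ →+* _), hp.map _, ?_⟩
  rw [eval₂_map, ← eval_map]
  change (p.map (φ : MvPolynomial (Fin n) R →+* MvPolynomial (Fin n) R)).eval _ = 0
  rw [h, eval_prod]
  exact Finset.prod_eq_zero (Finset.mem_univ j) (by simp)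

theorem algHom_ext_of_map_freeMonic_eq {R A : Type*} [CommRing R] [CommRing A] [Algebra R A]
    {n : ℕ} {φ ψ : MvPolynomial (Fin n) R →ₐ[R] A}
    (h : (freeMonic R n).map (φ : MvPolynomial (Fin n) R →+* A) =
      (freeMonic R n).map (ψ : MvPolynomial (Fin n) R →+* A)) : φ = ψ :=
  (MvPolynomial.mapEquivMonic R A n).injective (Subtype.ext h)

theorem separable_and_natCard_gal_map_of_forall_perm {A B ι : Type*} [CommRing A] [CommRing B]
    [IsDomain B] [Fintype ι] (K : Type*) [Field K] [Algebra A K] [IsFractionRing A K] {φ : A →+* B}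
    (hφ : Function.Injective φ) {p : A[X]} {x : ι → B} (hx : Function.Injective x)
    (hp : p.map φ = ∏ i, (X - C (x i)))
    (hperm : ∀ q : Equiv.Perm ι, ∃ σ : B ≃+* B,
      (σ : B →+* B).comp φ = φ ∧ ∀ i, σ (x i) = x (q i)) :
    (p.map (algebraMap A K)).Separable ∧
      Nat.card (p.map (algebraMap A K)).Gal = (Fintype.card ι).factorial := by
  let L := FractionRing B
  let : Algebra A B := φ.toAlgebra
  have : FaithfulSMul A B := (faithfulSMul_iff_algebraMap_injective A B).2 hφ
  have hAL : Function.Injective (algebraMap A L) := FaithfulSMul.algebraMap_injective A L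
  let : Algebra K L := (IsFractionRing.lift hAL).toAlgebra
  have : IsScalarTower A K L :=
    .of_algebraMap_eq fun a => (IsFractionRing.lift_algebraMap hAL a).symm
  have hxL : Function.Injective fun i => algebraMap B L (x i) :=
    (IsFractionRing.injective B L).comp hx
  have hpL : (p.map (algebraMap A K)).map (algebraMap K L) =
      ∏ i, (X - C (algebraMap B L (x i))) := by
    rw [Polynomial.map_map, ← IsScalarTower.algebraMap_eq, IsScalarTower.algebraMap_eq A B L,
      ← Polynomial.map_map, RingHom.algebraMap_toAlgebra, hp]
    simp [Polynomial.map_prod]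
  refine ⟨(separable_map (algebraMap K L)).1 (hpL ▸ separable_prod_X_sub_C_iff.2 hxL),
    natCard_gal_eq_factorial_of_forall_perm hxL hpL fun q => ?_⟩
  obtain ⟨σ, hσφ, hσ⟩ := hperm q
  let τ : B ≃ₐ[A] B := AlgEquiv.ofRingEquiv (f := σ) (RingHom.congr_fun hσφ)
  exact ⟨IsFractionRing.fieldEquivOfAlgEquiv K L L τ, fun i => by
    rw [IsFractionRing.fieldEquivOfAlgEquiv_algebraMap]; exact congrArg _ (hσ i)⟩

theorem exists_injective_algHom_map_freeMonic_sub_C {R : Type*} [CommRing R] [IsDomain R] {n : ℕ}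
    (hn : n ≠ 0) (a : R) :
    ∃ φ : MvPolynomial (Fin n) R →ₐ[R] MvPolynomial (Fin n) R, Function.Injective φ ∧
      (∀ q : Equiv.Perm (Fin n), (MvPolynomial.renameEquiv R q : _ →ₐ[R] _).comp φ = φ) ∧
      (freeMonic R n - C (MvPolynomial.C a)).map
          (φ : MvPolynomial (Fin n) R →+* MvPolynomial (Fin n) R) =
        ∏ i, (X - C (MvPolynomial.X i)) := by
  set P : (MvPolynomial (Fin n) R)[X] := ∏ i, (X - C (MvPolynomial.X i)) with hP
  have hmonic : P.Monic := monic_prod_of_monic _ _ fun i _ => monic_X_sub_C _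
  have hdeg : P.natDegree = n := by
    rw [hP, natDegree_prod_of_monic _ _ fun i _ => monic_X_sub_C _]; simp
  have hlt : (C (MvPolynomial.C a) : (MvPolynomial (Fin n) R)[X]).degree < P.degree := by
    refine degree_C_le.trans_lt (natDegree_pos_iff_degree_pos.1 ?_)
    rw [hdeg]
    exact hn.bot_lt
  obtain ⟨φ, hφ⟩ := exists_algHom_map_freeMonic_eq R (hmonic.add_of_left hlt)
    (by rw [natDegree_add_C, hdeg])
  have hp : (freeMonic R n - C (MvPolynomial.C a)).map
      (φ : MvPolynomial (Fin n) R →+* MvPolynomial (Fin n) R) = P := by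
    rw [Polynomial.map_sub, hφ, map_C, RingHom.coe_coe, MvPolynomial.algHom_C,
      MvPolynomial.algebraMap_eq, add_sub_cancel_right]
  refine ⟨φ, injective_of_map_eq_prod_X_sub_C (monic_freeMonic_sub_C R hn _) hp, fun q => ?_, hp⟩
  refine algHom_ext_of_map_freeMonic_eq ?_
  rw [AlgHom.comp_toRingHom, ← Polynomial.map_map, hφ]
  simpa [hP, Polynomial.map_prod] using
    Equiv.prod_comp q fun i => (X - C (MvPolynomial.X i) : (MvPolynomial (Fin n) R)[X])

theorem separable_and_natCard_gal_map_freeMonic_sub_C {R : Type*} [CommRing R] [IsDomain R] {n : ℕ}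
    (hn : n ≠ 0) (a : R) (K : Type*) [Field K] [Algebra (MvPolynomial (Fin n) R) K]
    [IsFractionRing (MvPolynomial (Fin n) R) K] :
    ((freeMonic R n - C (MvPolynomial.C a)).map (algebraMap _ K)).Separable ∧
      Nat.card ((freeMonic R n - C (MvPolynomial.C a)).map (algebraMap _ K)).Gal =
        n.factorial := by
  obtain ⟨φ, hinj, hφ, hp⟩ := exists_injective_algHom_map_freeMonic_sub_C hn a
  have hgal := separable_and_natCard_gal_map_of_forall_perm K hinj
    (MvPolynomial.X_injective (σ := Fin n)) hp fun q => ⟨MvPolynomial.renameEquiv R q,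
      congrArg AlgHom.toRingHom (hφ q), MvPolynomial.rename_X q⟩
  rwa [Fintype.card_fin] at hgal

end Symmetric

section Product

variable {K L : Type*} [Field K] [Field L] [Algebra K L]

theorem map_eq_prod_rootSet_X_sub_C {p : K[X]} (hp : p.Monic) (hsep : p.Separable)
    (hsplits : (p.map (algebraMap K L)).Splits) :
    p.map (algebraMap K L) = ∏ a : p.rootSet L, (X - C (a : L)) := by
  classical
  have hnodup : (p.aroots L).Nodup := nodup_roots hsep.map
  rw [hsplits.eq_prod_roots_of_monic (hp.map _)]
  change ((p.aroots L).map _).prod = ∏ a : (p.aroots L).toFinset, _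
  rw [Finset.prod_coe_sort _ fun a : L => X - C a, Finset.prod, Multiset.toFinset_val,
    hnodup.dedup]

theorem exists_sq_eq_discr {p : K[X]} (hp : p.Monic) (hsep : p.Separable)
    [hsplits : Fact (p.map (algebraMap K L)).Splits] [DecidableEq (p.rootSet L)] :
    ∃ δ : L, δ ^ 2 = algebraMap K L p.discr ∧ ∀ σ : L ≃ₐ[K] L,
      σ δ = (Equiv.Perm.sign (Gal.galActionHom p L (Gal.restrict p L σ)) : ℤ) * δ := by
  let e := (Fintype.equivFin (p.rootSet L)).symm
  refine ⟨(Matrix.vandermonde fun i => (e i : L)).det, ?_, fun σ => ?_⟩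
  · rw [← discr_prod_X_sub_C, ← discr_map_of_monic hp,
      map_eq_prod_rootSet_X_sub_C hp hsep hsplits.out, Equiv.prod_comp e fun a => X - C (a : L)]
  · set τ := Gal.galActionHom p L (Gal.restrict p L σ) with hτ
    have hσ (i) : σ (e i) = e (e.symm.permCongr τ i) := by
      rw [← Gal.galActionHom_restrict p L σ, ← hτ]
      simp
    rw [← Equiv.Perm.sign_permCongr e.symm τ, ← Matrix.det_permute, AlgEquiv.map_det]
    congr 1
    ext i j
    simp [Matrix.vandermonde_apply, hσ]

variable {ι : Type*} {p : ι → K[X]}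

theorem isSquare_prod_discr_of_prod_sign_eq_one [IsGalois K L] (hp : ∀ i, (p i).Monic)
    (hsep : ∀ i, (p i).Separable) [∀ i, Fact ((p i).map (algebraMap K L)).Splits]
    [∀ i, DecidableEq ((p i).rootSet L)] {S : Finset ι}
    (hS : ∀ σ : L ≃ₐ[K] L,
      ∏ i ∈ S, Equiv.Perm.sign (Gal.galActionHom (p i) L (Gal.restrict (p i) L σ)) = 1) :
    IsSquare (∏ i ∈ S, (p i).discr) := by
  choose δ hδ hδσ using fun i => exists_sq_eq_discr (L := L) (hp i) (hsep i)
  have hfixed (σ : L ≃ₐ[K] L) : σ (∏ i ∈ S, δ i) = ∏ i ∈ S, δ i := by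
    simp only [map_prod, hδσ, Finset.prod_mul_distrib]
    rw [← Int.cast_prod, ← Units.coe_prod, hS, Units.val_one, Int.cast_one, one_mul]
  obtain ⟨k, hk⟩ := (InfiniteGalois.mem_range_algebraMap_iff_fixed _).2 hfixed
  refine ⟨k, (algebraMap K L).injective ?_⟩
  rw [map_mul, hk, ← sq, map_prod, ← Finset.prod_pow]
  exact Finset.prod_congr rfl fun i _ => (hδ i).symm

theorem injective_pi_galActionHom_restrict [Fintype ι] (hp : ∏ i, p i ≠ 0)
    [IsSplittingField K L (∏ i, p i)] [∀ i, Fact ((p i).map (algebraMap K L)).Splits] :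
    Function.Injective
      (MonoidHom.pi fun i => (Gal.galActionHom (p i) L).comp (Gal.restrict (p i) L)) := by
  intro σ τ h
  suffices (σ : L →ₐ[K] L) = τ from AlgEquiv.coe_toAlgHom_injective this
  refine AlgHom.ext_of_adjoin_eq_top (IsSplittingField.adjoin_rootSet L (∏ i, p i)) fun x hx => ?_
  obtain ⟨i, -, hi⟩ : ∃ i ∈ Finset.univ, aeval x (p i) = 0 := by
    rw [← Finset.prod_eq_zero_iff, ← map_prod]
    exact aeval_eq_zero_of_mem_rootSet hx
  have hxi : x ∈ (p i).rootSet L :=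
    mem_rootSet.2 ⟨Finset.prod_ne_zero_iff.1 hp i (Finset.mem_univ i), hi⟩
  have hi := congr_arg Subtype.val (Equiv.congr_fun (congr_fun h i) ⟨x, hxi⟩)
  simpa [Gal.galActionHom_restrict] using hi

theorem surjective_galActionHom_of_natCard_gal {p : K[X]} (hsep : p.Separable)
    (hcard : Nat.card p.Gal = p.natDegree.factorial)
    [hsplits : Fact (p.map (algebraMap K L)).Splits] :
    Function.Surjective (Gal.galActionHom p L) := by
  refine ((Nat.bijective_iff_injective_and_card _).2 ⟨Gal.galActionHom_injective p L, ?_⟩).2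
  rw [hcard, Nat.card_perm, Nat.card_eq_fintype_card, card_rootSet_eq_natDegree hsep hsplits.out]

theorem natCard_gal_prod_eq_prod_factorial [PerfectField K] [Fintype ι] (hp : ∀ i, (p i).Monic)
    (hsep : ∀ i, (p i).Separable)
    (hcard : ∀ i, Nat.card (p i).Gal = (p i).natDegree.factorial)
    (hdiscr : ∀ S : Finset ι, S.Nonempty → ¬ IsSquare (∏ i ∈ S, (p i).discr)) :
    Nat.card (∏ i, p i).Gal = ∏ i, (p i).natDegree.factorial := by
  classical
  let L := (∏ i, p i).SplittingField
  have hp0 : ∏ i, p i ≠ 0 := (monic_prod_of_monic _ _ fun i _ => hp i).ne_zero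
  have hsplits (i) : Fact ((p i).map (algebraMap K L)).Splits :=
    ⟨(SplittingField.splits (∏ i, p i)).of_dvd (Polynomial.map_ne_zero hp0)
      ((map_dvd_map' _).2 (Finset.dvd_prod_of_mem _ (Finset.mem_univ i)))⟩
  have : Normal K L := Normal.of_isSplittingField (∏ i, p i)
  have : IsGalois K L := ⟨⟩
  have hbij : Function.Bijective
      (MonoidHom.pi fun i => (Gal.galActionHom (p i) L).comp (Gal.restrict (p i) L)) := by
    refine ⟨injective_pi_galActionHom_restrict hp0,
      surjective_pi_of_prod_sign_ne_one (fun i => ?_) fun S hS => ?_⟩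
    · exact (surjective_galActionHom_of_natCard_gal (hsep i) (hcard i)).comp
        (Gal.restrict_surjective (p i) L)
    · by_contra! h
      exact hdiscr S hS (isSquare_prod_discr_of_prod_sign_eq_one (L := L) hp hsep h)
  calc Nat.card (L ≃ₐ[K] L) = Nat.card (∀ i, Equiv.Perm ((p i).rootSet L)) :=
        Nat.card_congr (Equiv.ofBijective _ hbij)
    _ = ∏ i, (p i).natDegree.factorial := by
        simp only [Fintype.card_pi, Fintype.card_perm, Nat.card_eq_fintype_card,
          card_rootSet_eq_natDegree (hsep _) (hsplits _).out]

end Product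

section Tower

theorem natCard_gal_eq_natCard_algEquiv {K : Type*} (L : Type*) [Field K] [Field L] [Algebra K L]
    (p : K[X]) [IsSplittingField K L p] : Nat.card p.Gal = Nat.card (L ≃ₐ[K] L) :=
  (Nat.card_congr (AlgEquiv.autCongr (IsSplittingField.algEquiv L p)).toEquiv).symm

theorem natCard_gal_eq_finrank {K : Type*} (L : Type*) [Field K] [Field L] [Algebra K L]
    [IsGalois K L] (p : K[X]) [IsSplittingField K L p] : Nat.card p.Gal = Module.finrank K L := by
  have : FiniteDimensional K L := IsSplittingField.finiteDimensional L p
  rw [natCard_gal_eq_natCard_algEquiv L p, IsGalois.card_aut_eq_finrank]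

theorem isSplittingField_of_surjective {K K' L : Type*} [Field K] [Field K'] [Field L]
    [Algebra K K'] [Algebra K' L] [Algebra K L] [IsScalarTower K K' L]
    (h : Function.Surjective (algebraMap K K')) (p : K[X])
    [hp : IsSplittingField K' L (p.map (algebraMap K K'))] : IsSplittingField K L p := by
  have hmap : (p.map (algebraMap K K')).map (algebraMap K' L) = p.map (algebraMap K L) := by
    rw [Polynomial.map_map, ← IsScalarTower.algebraMap_eq]
  let e : K ≃ₐ[K] K' :=
    AlgEquiv.ofBijective (Algebra.ofId K K') ⟨(algebraMap K K').injective, h⟩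
  have hroots : (p.map (algebraMap K K')).rootSet L = p.rootSet L := by
    rw [rootSet, rootSet, aroots_def, aroots_def, hmap]
  refine ⟨hmap ▸ hp.splits, ?_⟩
  have hadjoin := Algebra.restrictScalars_adjoin_of_algEquiv e
    (funext (IsScalarTower.algebraMap_apply K K' L)) (p.rootSet L)
  rwa [← hroots, hp.adjoin_rootSet, Subalgebra.restrictScalars_top, hroots] at hadjoin

theorem natCard_gal_map_ringEquiv {K K' : Type*} [Field K] [Field K'] (σ : K ≃+* K') (p : K[X]) :
    Nat.card (p.map σ.toRingHom).Gal = Nat.card p.Gal := by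
  let : Algebra K K' := σ.toRingHom.toAlgebra
  let L := (p.map (algebraMap K K')).SplittingField
  have : IsSplittingField K L p := isSplittingField_of_surjective (K' := K') σ.surjective p
  rw [natCard_gal_eq_natCard_algEquiv L p]
  exact Nat.card_congr (AlgEquiv.extendScalarsHomOfSurjective (R := K) σ.surjective).symm.toEquiv

theorem comp_ne_zero {R : Type*} [CommRing R] [IsDomain R] {f g : R[X]} (hf : f ≠ 0)
    (hg : g.natDegree ≠ 0) : f.comp g ≠ 0 := by
  intro h
  rcases comp_eq_zero_iff.1 h with h | ⟨-, h⟩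
  exacts [hf h, hg (h ▸ natDegree_C _)]

theorem exists_aeval_eq_of_splits_comp {K L : Type*} [Field K] [Field L] [Algebra K L]
    {f g : K[X]} (hf : f ≠ 0) (hg : g.natDegree ≠ 0)
    (hsplits : ((f.comp g).map (algebraMap K L)).Splits) {x : L} (hx : aeval x f = 0) :
    ∃ y, aeval y g = x := by
  have hdvd : g.map (algebraMap K L) - C x ∣ (f.comp g).map (algebraMap K L) := by
    obtain ⟨q, hq⟩ := dvd_iff_isRoot.2 (show (f.map (algebraMap K L)).IsRoot x by
      rwa [IsRoot, eval_map_algebraMap])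
    exact ⟨q.comp (g.map (algebraMap K L)), by rw [Polynomial.map_comp, hq]; simp⟩
  have hsplits_sub := hsplits.of_dvd (Polynomial.map_ne_zero (comp_ne_zero hf hg)) hdvd
  obtain ⟨y, hy⟩ := hsplits_sub.exists_eval_eq_zero fun h =>
    hg (by simpa using natDegree_eq_zero_iff_degree_le_zero.2 h.le)
  exact ⟨y, by simpa [sub_eq_zero] using hy⟩

theorem isSplittingField_comp {k K L : Type*} [Field k] [Field K] [Field L] [Algebra k K]
    [Algebra K L] [Algebra k L] [IsScalarTower k K L] {f g : k[X]} (hf : f ≠ 0)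
    (hg : g.natDegree ≠ 0) [IsSplittingField k K f]
    [IsSplittingField K L ((f.comp g).map (algebraMap k K))] :
    IsSplittingField k L (f.comp g) := by
  have hfg : f.comp g ≠ 0 := comp_ne_zero hf hg
  have hmul : IsSplittingField k L (f * f.comp g) := IsSplittingField.mul (K := K) L f _ hf hfg
  have hsplits : ((f.comp g).map (algebraMap k L)).Splits :=
    hmul.splits.of_dvd (Polynomial.map_ne_zero (mul_ne_zero hf hfg))
      ((map_dvd_map' _).2 (dvd_mul_left _ _))
  refine ⟨hsplits, top_le_iff.1 (hmul.adjoin_rootSet.symm.trans_le ?_)⟩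
  refine Algebra.adjoin_le fun x hx => ?_
  have hx0 := aeval_eq_zero_of_mem_rootSet hx
  rw [map_mul, mul_eq_zero] at hx0
  rcases hx0 with hx | hx
  · obtain ⟨y, rfl⟩ := exists_aeval_eq_of_splits_comp hf hg hsplits hx
    refine Algebra.adjoin_mono (Set.singleton_subset_iff.2 (mem_rootSet.2 ⟨hfg, ?_⟩))
      (aeval_mem_adjoin_singleton k y)
    rwa [aeval_comp]
  · exact Algebra.subset_adjoin (mem_rootSet.2 ⟨hfg, hx⟩)

theorem natCard_gal_comp {k : Type*} (K : Type*) [Field k] [PerfectField k] [Field K]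
    [Algebra k K] {f g : k[X]} (hf : f ≠ 0) (hg : g.natDegree ≠ 0) [IsSplittingField k K f] :
    Nat.card (f.comp g).Gal =
      Nat.card f.Gal * Nat.card ((f.comp g).map (algebraMap k K)).Gal := by
  let L := ((f.comp g).map (algebraMap k K)).SplittingField
  have : IsSplittingField k L (f.comp g) := isSplittingField_comp (K := K) hf hg
  have : Normal k K := Normal.of_isSplittingField f
  have : Normal k L := Normal.of_isSplittingField (f.comp g)
  have : IsGalois k K := ⟨⟩
  have : IsGalois k L := ⟨⟩
  have : IsGalois K L := IsGalois.tower_top_of_isGalois k K L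
  rw [natCard_gal_eq_finrank L (f.comp g), natCard_gal_eq_finrank K f,
    natCard_gal_eq_finrank L, Module.finrank_mul_finrank]

theorem isSplittingField_map_of_adjoin_range_eq_top {F E K L : Type*} [Field F] [Field E]
    [Field K] [Field L] [Algebra F E] [Algebra F K] [Algebra F L] [Algebra K L] [Algebra E L]
    [IsScalarTower F K L] [IsScalarTower F E L] (f : F[X]) [hf : IsSplittingField F E f]
    (h : IntermediateField.adjoin K (Set.range (algebraMap E L)) = ⊤) :
    IsSplittingField K L (f.map (algebraMap F K)) := by
  have hmap : (f.map (algebraMap F K)).map (algebraMap K L) =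
      (f.map (algebraMap F E)).map (algebraMap E L) := by
    rw [Polynomial.map_map, Polynomial.map_map, ← IsScalarTower.algebraMap_eq,
      ← IsScalarTower.algebraMap_eq]
  rw [isSplittingField_iff_intermediateField]
  refine ⟨hmap ▸ hf.splits.map _, top_le_iff.1 (h ▸ IntermediateField.adjoin_le_iff.2 ?_)⟩
  set M := IntermediateField.adjoin K ((f.map (algebraMap F K)).rootSet L)
  have hle : Algebra.adjoin F (f.rootSet E) ≤
      (M.toSubalgebra.restrictScalars F).comap (IsScalarTower.toAlgHom F E L) := by
    refine Algebra.adjoin_le fun x hx => IntermediateField.subset_adjoin K _ (mem_rootSet.2 ?_)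
    obtain ⟨hf0, hx⟩ := mem_rootSet.1 hx
    refine ⟨Polynomial.map_ne_zero hf0, ?_⟩
    change aeval (algebraMap E L x) _ = 0
    rw [aeval_map_algebraMap, aeval_algebraMap_apply, hx, map_zero]
  rintro _ ⟨e, rfl⟩
  exact hle (hf.adjoin_rootSet ▸ Algebra.mem_top : e ∈ Algebra.adjoin F (f.rootSet E))

end Tower

section RationalFunctions

attribute [local instance] MvPolynomial.algebraMvPolynomial FractionRing.liftAlgebra

theorem algebraMap_fractionRing_mvPolynomial_X {σ : Type*} (F E : Type*) [Field F] [Field E]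
    [Algebra F E] (i : σ) :
    algebraMap (FractionRing (MvPolynomial σ F)) (FractionRing (MvPolynomial σ E))
      (algebraMap (MvPolynomial σ F) _ (MvPolynomial.X i)) =
        algebraMap (MvPolynomial σ E) _ (MvPolynomial.X i) := by
  rw [← IsScalarTower.algebraMap_apply,
    IsScalarTower.algebraMap_apply (MvPolynomial σ F) (MvPolynomial σ E)]
  simp

theorem adjoin_range_algebraMap_fractionRing_mvPolynomial (σ F E : Type*) [Field F] [Field E]
    [Algebra F E] :
    IntermediateField.adjoin (FractionRing (MvPolynomial σ F))
      (Set.range (algebraMap E (FractionRing (MvPolynomial σ E)))) = ⊤ := by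
  set M := IntermediateField.adjoin (FractionRing (MvPolynomial σ F))
    (Set.range (algebraMap E (FractionRing (MvPolynomial σ E))))
  have hM (p : MvPolynomial σ E) : algebraMap _ (FractionRing (MvPolynomial σ E)) p ∈ M := by
    induction p using MvPolynomial.induction_on with
    | C a => exact IntermediateField.subset_adjoin _ _ ⟨a, rfl⟩
    | add p q hp hq =>
      rw [map_add]
      exact M.add_mem hp hq
    | mul_X p i hp =>
      rw [map_mul, ← algebraMap_fractionRing_mvPolynomial_X F E]
      exact M.mul_mem hp (M.algebraMap_mem _)
  refine eq_top_iff.2 fun x _ => ?_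
  obtain ⟨p, q, -, rfl⟩ := IsFractionRing.div_surjective (A := MvPolynomial σ E) x
  exact M.div_mem (hM p) (hM q)

theorem isSplittingField_fractionRing_mvPolynomial (σ : Type*) {F E : Type*} [Field F] [Field E]
    [Algebra F E] (f : F[X]) [IsSplittingField F E f] :
    IsSplittingField (FractionRing (MvPolynomial σ F)) (FractionRing (MvPolynomial σ E))
      (f.map (algebraMap F (FractionRing (MvPolynomial σ F)))) :=
  isSplittingField_map_of_adjoin_range_eq_top (E := E) f
    (adjoin_range_algebraMap_fractionRing_mvPolynomial σ F E)

theorem natCard_gal_map_fractionRing_mvPolynomial (σ : Type*) {F : Type*} [Field F] {f : F[X]}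
    (hf : f.Separable) :
    Nat.card (f.map (algebraMap F (FractionRing (MvPolynomial σ F)))).Gal = Nat.card f.Gal := by
  let E := f.SplittingField
  let k := FractionRing (MvPolynomial σ F)
  let K := FractionRing (MvPolynomial σ E)
  have := isSplittingField_fractionRing_mvPolynomial σ (E := E) f
  have : FiniteDimensional F E := IsSplittingField.finiteDimensional E f
  have : IsGalois F E := IsGalois.of_separable_splitting_field hf
  have : IsGalois k K := IsGalois.of_separable_splitting_field (hf.map (f := algebraMap F k))
  rw [natCard_gal_eq_finrank K, natCard_gal_eq_finrank E, Module.finrank, Module.finrank,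
    Algebra.IsAlgebraic.rank_fractionRing_mvPolynomial, Cardinal.toNat_lift]

theorem natCard_gal_prod_map_freeMonic_sub_C {E ι : Type*} [Field E] [CharZero E] [Fintype ι]
    {n : ℕ} (hn : 2 ≤ n) {α : ι → E} (hα : Function.Injective α) (K : Type*) [Field K]
    [Algebra (MvPolynomial (Fin n) E) K] [IsFractionRing (MvPolynomial (Fin n) E) K] :
    Nat.card (∏ i, (freeMonic E n - C (MvPolynomial.C (α i))).map (algebraMap _ K)).Gal =
      n.factorial ^ Fintype.card ι := by
  have hn0 : n ≠ 0 := by omega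
  have : CharZero K := charZero_of_injective_algebraMap
    (IsFractionRing.injective (MvPolynomial (Fin n) E) K)
  have hmonic (i) := monic_freeMonic_sub_C E hn0 (MvPolynomial.C (α i))
  have hdeg (i) :
      ((freeMonic E n - C (MvPolynomial.C (α i))).map (algebraMap _ K)).natDegree = n := by
    rw [(hmonic i).natDegree_map, natDegree_sub_C, natDegree_freeMonic]
  have hgal (i) := separable_and_natCard_gal_map_freeMonic_sub_C hn0 (α i) K
  rw [natCard_gal_prod_eq_prod_factorial (fun i => (hmonic i).map _) (fun i => (hgal i).1)
    (fun i => by rw [hdeg, (hgal i).2])]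
  · simp only [hdeg, Finset.prod_const, Finset.card_univ]
  intro S hS hsq
  refine not_isSquare_prod_discr_freeMonic_sub_C hn hα hS
    (isSquare_of_isSquare_algebraMap (K := K) ?_)
  simpa only [map_prod, discr_map_of_monic (hmonic _)] using hsq

theorem map_map_freeMonic_fractionRing (n : ℕ) (F E : Type*) [Field F] [Field E] [Algebra F E] :
    ((freeMonic F n).map (algebraMap _ (FractionRing (MvPolynomial (Fin n) F)))).map
      (algebraMap _ (FractionRing (MvPolynomial (Fin n) E))) =
        (freeMonic E n).map (algebraMap _ _) := by
  simp [freeMonic, Polynomial.map_sum, algebraMap_fractionRing_mvPolynomial_X]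

theorem natCard_gal_map_comp_map_freeMonic {F : Type*} [Field F] [CharZero F] {f : F[X]}
    (hf : f.Monic) (hsep : f.Separable) {n : ℕ} (hn : 2 ≤ n) :
    Nat.card ((f.map (algebraMap F (FractionRing (MvPolynomial (Fin n) F)))).comp
      ((freeMonic F n).map (algebraMap _ _))).Gal =
        Nat.card f.Gal * n.factorial ^ f.natDegree := by
  classical
  let E := f.SplittingField
  let k := FractionRing (MvPolynomial (Fin n) F)
  let K := FractionRing (MvPolynomial (Fin n) E)
  have : CharZero E := charZero_of_injective_algebraMap (algebraMap F E).injective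
  have : CharZero k := charZero_of_injective_algebraMap
    (IsFractionRing.injective (MvPolynomial (Fin n) F) k)
  have := isSplittingField_fractionRing_mvPolynomial (Fin n) (E := E) f
  have hdeg : ((freeMonic F n).map (algebraMap _ k)).natDegree ≠ 0 := by
    rw [(monic_freeMonic F n).natDegree_map, natDegree_freeMonic]
    omega
  have hprod : ((f.map (algebraMap F k)).comp ((freeMonic F n).map (algebraMap _ k))).map
      (algebraMap k K) =
        ∏ a : f.rootSet E, (freeMonic E n - C (MvPolynomial.C (a : E))).map (algebraMap _ K) := by
    rw [Polynomial.map_comp, map_map_freeMonic_fractionRing, Polynomial.map_map,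
      ← IsScalarTower.algebraMap_eq, IsScalarTower.algebraMap_eq F E K, ← Polynomial.map_map,
      map_eq_prod_rootSet_X_sub_C hf hsep (SplittingField.splits f), Polynomial.map_prod, prod_comp]
    simp only [Polynomial.map_sub, map_X, map_C, sub_comp, X_comp, C_comp]
    rfl
  rw [natCard_gal_comp K (Polynomial.map_ne_zero hf.ne_zero) hdeg, hprod,
    natCard_gal_prod_map_freeMonic_sub_C hn Subtype.val_injective,
    natCard_gal_map_fractionRing_mvPolynomial _ hsep,
    card_rootSet_eq_natDegree hsep (SplittingField.splits f)]

theorem exists_ringEquiv_map_eq_map_freeMonic (n : ℕ) (F : Type*) [Field F] :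
    ∃ σ : FractionRing (MvPolynomial (Fin n) F) ≃+* FractionRing (MvPolynomial (Fin n) F),
      σ.toRingHom.comp (algebraMap F _) = algebraMap F _ ∧
      (X ^ n + ∑ i : Fin n,
        C (algebraMap (MvPolynomial (Fin n) F) (FractionRing (MvPolynomial (Fin n) F))
          (MvPolynomial.X i)) * X ^ (n - 1 - (i : ℕ))).map σ.toRingHom =
        (freeMonic F n).map (algebraMap _ _) := by
  -- `freeMonic` has `X i` as coefficient of `X ^ i`, so the variables have to be reversed.
  let σ : FractionRing (MvPolynomial (Fin n) F) ≃ₐ[F] FractionRing (MvPolynomial (Fin n) F) :=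
    IsFractionRing.algEquivOfAlgEquiv (A := MvPolynomial (Fin n) F) (B := MvPolynomial (Fin n) F)
      (MvPolynomial.renameEquiv F Fin.revPerm)
  have hσ (i) : σ (algebraMap (MvPolynomial (Fin n) F) _ (MvPolynomial.X i)) =
      algebraMap (MvPolynomial (Fin n) F) _ (MvPolynomial.X i.rev) := by
    simp [σ]
  refine ⟨σ.toRingEquiv, RingHom.ext σ.commutes, ?_⟩
  simp only [RingEquiv.toRingHom_eq_coe, AlgEquiv.toRingEquiv_toRingHom, Polynomial.map_add,
    Polynomial.map_pow, map_X, Polynomial.map_sum, Polynomial.map_mul, map_C, RingHom.coe_coe, hσ,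
    freeMonic, add_right_inj]
  refine Fintype.sum_equiv Fin.revPerm _ _ fun i => ?_
  rw [Fin.revPerm_apply, Fin.val_rev, Nat.sub_sub, Nat.add_comm 1]

end RationalFunctions

theorem stmt13 (F : Type*) [Field F] [CharZero F]
    (f : F[X]) (d : ℕ) (hmonic : f.Monic) (hdeg : f.natDegree = d) (hd : 1 ≤ d)
    (hsq : Squarefree f) (ℓ : ℕ) (hℓ : 2 ≤ ℓ) :
    Nat.card
        (((f.map (algebraMap F (FractionRing (MvPolynomial (Fin ℓ) F)))).comp
          (X ^ ℓ + ∑ i : Fin ℓ,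
            C (algebraMap (MvPolynomial (Fin ℓ) F)
                (FractionRing (MvPolynomial (Fin ℓ) F)) (MvPolynomial.X i)) *
              X ^ (ℓ - 1 - (i : ℕ)))).Gal) =
      Nat.card f.Gal * ℓ.factorial ^ d := by
  obtain ⟨σ, hσF, hσ⟩ := exists_ringEquiv_map_eq_map_freeMonic ℓ F
  rw [← natCard_gal_map_ringEquiv σ, Polynomial.map_comp, Polynomial.map_map, hσF, hσ, ← hdeg]
  exact natCard_gal_map_comp_map_freeMonic hmonic (PerfectField.separable_iff_squarefree.2 hsq) hℓ
end

section
/- Let f = x² − 2 ∈ ℤ[x] and for n ≥ 1 let f^{(n)} denote its n-fold iterate f∘f∘⋯∘f. Then the set of prime numbers p such that f^{(n)} mod p is irreducible in 𝔽_p[x] for every n ≥ 1 coincides, among odd primes, with the set of primes p with p ≡ 3 (mod 8) or p ≡ 5 (mod 8); in particular this set of stable primes has natural density 1/2 within the set of all prime numbers. -/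
open Polynomial Filter Topology

/-- `iterComp f n = f ∘ f ∘ ⋯ ∘ f` (`n` times), the `n`-th iterate `f^{(n)}`. -/
noncomputable def iterComp {R : Type*} [CommRing R] (f : R[X]) : ℕ → R[X]
  | 0 => X
  | n + 1 => f.comp (iterComp f n)

/-- A prime `p` is stable for `f ∈ ℤ[x]` if every iterate of `f` is irreducible mod `p`. -/
def StablePrime (f : Polynomial ℤ) (p : ℕ) : Prop :=
  p.Prime ∧ ∀ n, 1 ≤ n → Irreducible ((iterComp f n).map (Int.castRingHom (ZMod p)))

/-!
By Capelli's criterion, `g(x² - c)` is irreducible as soon as `g` is monic irreducible and the norm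
`(-1)^deg g * g(-c)` of `θ + c`, where `g(θ) = 0`, is not a square. For `x² - 2` the critical orbit
is `0 ↦ -2 ↦ 2 ↦ 2`, so all these norms equal `2`, and all iterates are irreducible over a field
exactly when `2` is not a square; modulo `p` this means `p ≡ 3, 5 (mod 8)`.

The density is the prime number theorem in residue classes modulo `8`. It follows from the
nonvanishing of Dirichlet `L`-functions on `re s = 1` by the Wiener–Ikehara theorem, for which
Chebyshev's bound makes a short proof available: with `S t = e^{-t} ∑_{n ≤ e^t} a n` bounded,
Parseval and the Riemann–Lebesgue lemma show that the means of `S` against any band-limited kernel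
converge, and since `e^t S t` is monotone, kernels concentrated near `0` force `S` itself to
converge.
-/

section Iterates

variable {R : Type*} [CommRing R]

lemma iterComp_eq_iterate (f : R[X]) (n : ℕ) : iterComp f n = f.comp^[n] X := by
  induction n with
  | zero => rfl
  | succ n ih => rw [iterComp, ih, Function.iterate_succ_apply']

lemma iterComp_one (f : R[X]) : iterComp f 1 = f :=
  comp_X

lemma iterComp_succ' (f : R[X]) (n : ℕ) : iterComp f (n + 1) = (iterComp f n).comp f := by
  induction n with
  | zero => exact comp_X.trans X_comp.symm
  | succ n ih =>
    calc iterComp f (n + 1 + 1) = f.comp (iterComp f (n + 1)) := rfl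
      _ = (f.comp (iterComp f n)).comp f := by rw [ih, comp_assoc]

lemma map_iterComp {S : Type*} [CommRing S] (φ : R →+* S) (f : R[X]) (n : ℕ) :
    (iterComp f n).map φ = iterComp (f.map φ) n := by
  induction n with
  | zero => exact map_X φ
  | succ n ih => rw [iterComp, iterComp, Polynomial.map_comp, ih]

lemma natDegree_iterComp [NoZeroDivisors R] [Nontrivial R] (f : R[X]) (n : ℕ) :
    (iterComp f n).natDegree = f.natDegree ^ n := by
  rw [iterComp_eq_iterate, natDegree_iterate_comp, natDegree_X, mul_one]

lemma eval_iterComp (f : R[X]) (n : ℕ) (x : R) :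
    (iterComp f n).eval x = (fun y => f.eval y)^[n] x := by
  rw [iterComp_eq_iterate, iterate_comp_eval, eval_X]

lemma monic_iterComp {f : R[X]} (hf : f.Monic) (hf₀ : f.natDegree ≠ 0) (n : ℕ) :
    (iterComp f n).Monic := by
  induction n with
  | zero => exact monic_X
  | succ n ih => exact iterComp_succ' f n ▸ ih.comp hf hf₀

end Iterates

section Capelli

lemma norm_algebraMap_sub_gen {R S : Type*} [CommRing R] [CommRing S] [Algebra R S]
    (pb : PowerBasis R S) (c : R) :
    Algebra.norm R (algebraMap R S c - pb.gen) = (minpoly R pb.gen).eval c := by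
  rw [← charpoly_leftMulMatrix pb, Matrix.eval_charpoly, Algebra.norm_eq_matrix_det pb.basis,
    map_sub, AlgHom.commutes]
  rfl

lemma norm_gen_add_algebraMap {R S : Type*} [CommRing R] [Nontrivial R] [CommRing S] [Algebra R S]
    (pb : PowerBasis R S) (c : R) :
    Algebra.norm R (pb.gen + algebraMap R S c) =
      (-1) ^ (minpoly R pb.gen).natDegree * (minpoly R pb.gen).eval (-c) := by
  have := Module.Free.of_basis pb.basis
  have hneg : pb.gen + algebraMap R S c =
      algebraMap R S (-1) * (algebraMap R S (-c) - pb.gen) := by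
    simp only [map_neg, map_one]; ring
  rw [hneg, map_mul, Algebra.norm_algebraMap, norm_algebraMap_sub_gen, pb.finrank,
    pb.natDegree_minpoly]

lemma irreducible_X_sq_sub_C_iff {K : Type*} [Field K] {a : K} :
    Irreducible (X ^ 2 - C a) ↔ ¬ IsSquare a := by
  rw [X_pow_sub_C_irreducible_iff_of_prime Nat.prime_two, isSquare_iff_exists_sq]
  simp only [ne_eq, not_exists, eq_comm]

lemma irreducible_comp_X_sq_sub_C {K : Type*} [Field K] {g : K[X]} (hg : g.Monic)
    (hirr : Irreducible g) {c : K} (hc : ¬ IsSquare ((-1) ^ g.natDegree * g.eval (-c))) :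
    Irreducible (g.comp (X ^ 2 - C c)) := by
  refine irreducible_comp hg (monic_X_pow_sub_C c two_ne_zero) hirr fun E _ _ x hx => ?_
  have hint : IsIntegral K x := minpoly.ne_zero_iff.mp (hx ▸ hg.ne_zero)
  have hnorm : Algebra.norm K (IntermediateField.AdjoinSimple.gen K x + algebraMap K _ c) =
      (-1) ^ g.natDegree * g.eval (-c) := by
    have h := norm_gen_add_algebraMap (IntermediateField.adjoin.powerBasis hint) c
    rwa [IntermediateField.adjoin.powerBasis_gen, IntermediateField.minpoly_gen, hx] at h
  have hpoly : (X ^ 2 - C c).map (algebraMap K (IntermediateField.adjoin K {x})) -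
      C (IntermediateField.AdjoinSimple.gen K x) =
      X ^ 2 - C (IntermediateField.AdjoinSimple.gen K x + algebraMap K _ c) := by
    simp only [Polynomial.map_sub, Polynomial.map_pow, map_X, map_C, C_add]; ring
  rw [hpoly, irreducible_X_sq_sub_C_iff]
  exact fun hsq => hc (hnorm ▸ hsq.map (Algebra.norm K))

end Capelli

section StablePrimes

variable {K : Type*} [Field K]

lemma irreducible_iterComp_X_sq_sub_C {c : K}
    (hc : ∀ n, ¬ IsSquare ((-1) ^ 2 ^ n * (iterComp (X ^ 2 - C c) n).eval (-c))) (n : ℕ) :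
    Irreducible (iterComp (X ^ 2 - C c) n) := by
  have hdeg : (X ^ 2 - C c).natDegree = 2 := natDegree_X_pow_sub_C
  induction n with
  | zero => exact irreducible_X
  | succ n ih =>
    have hmonic := monic_iterComp (monic_X_pow_sub_C c two_ne_zero) (by simp [hdeg]) n
    rw [iterComp_succ']
    refine irreducible_comp_X_sq_sub_C hmonic ih ?_
    rw [natDegree_iterComp, hdeg]
    exact hc n

lemma neg_one_pow_mul_eval_iterComp_X_sq_sub_two (n : ℕ) :
    (-1) ^ 2 ^ n * (iterComp (X ^ 2 - C 2 : K[X]) n).eval (-2) = 2 := by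
  cases n with
  | zero => simp [iterComp]
  | succ n =>
    have hfix : Function.IsFixedPt (fun y => (X ^ 2 - C 2 : K[X]).eval y) 2 := by
      norm_num [Function.IsFixedPt]
    have hstep : (X ^ 2 - C 2 : K[X]).eval (-2) = 2 := by norm_num
    rw [eval_iterComp, Function.iterate_succ_apply, hstep, hfix.iterate n,
      Even.neg_one_pow (by simp [pow_succ]), one_mul]

lemma forall_irreducible_iterComp_X_sq_sub_two_iff :
    (∀ n, 1 ≤ n → Irreducible (iterComp (X ^ 2 - C 2 : K[X]) n)) ↔ ¬ IsSquare (2 : K) := by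
  refine ⟨fun h => ?_, fun h n _ => irreducible_iterComp_X_sq_sub_C (fun m => ?_) n⟩
  · simpa only [iterComp_one, irreducible_X_sq_sub_C_iff] using h 1 le_rfl
  · rwa [neg_one_pow_mul_eval_iterComp_X_sq_sub_two]

theorem stablePrime_X_sq_sub_two_iff (p : ℕ) :
    StablePrime (X ^ 2 - 2) p ↔ p.Prime ∧ (p % 8 = 3 ∨ p % 8 = 5) := by
  refine and_congr_right fun hp => ?_
  have := Fact.mk hp
  have hmap : (X ^ 2 - 2 : ℤ[X]).map (Int.castRingHom (ZMod p)) = X ^ 2 - C 2 := by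
    simp [map_ofNat C 2]
  simp only [map_iterComp, hmap]
  rw [forall_irreducible_iterComp_X_sq_sub_two_iff]
  obtain rfl | hp₂ := eq_or_ne p 2
  · exact iff_of_false (not_not_intro ⟨0, rfl⟩) (by decide)
  · have := hp.eq_two_or_odd
    rw [ZMod.exists_sq_eq_two_iff hp₂]
    omega

end StablePrimes

section BandLimitedKernel

open MeasureTheory FourierTransform

/-- A nonnegative kernel of mass one on `ℝ` which is the Fourier transform of a continuous compactly
supported function: integrating against it only sees a bounded range of frequencies. -/
structure IsBandLimitedKernel (k : ℝ → ℝ) : Prop where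
  nonneg : ∀ t, 0 ≤ k t
  integral_eq_one : ∫ t, k t = 1
  exists_fourier_eq : ∃ φ : ℝ → ℂ, Continuous φ ∧ HasCompactSupport φ ∧ ∀ t, 𝓕 φ t = k t

lemma IsBandLimitedKernel.integrable {k : ℝ → ℝ} (hk : IsBandLimitedKernel k) : Integrable k :=
  Integrable.of_integral_ne_zero (hk.integral_eq_one ▸ one_ne_zero)

lemma fourier_comp_div (φ : ℝ → ℂ) {l : ℝ} (hl : 0 < l) (t : ℝ) :
    𝓕 (fun y => φ (y / l)) t = l * 𝓕 φ (l * t) := by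
  have h := Measure.integral_comp_div (fun y => Real.fourierChar (-(y * (l * t))) • φ y) l
  rw [abs_of_pos hl, Complex.real_smul] at h
  simp only [Real.fourier_real_eq]
  rw [← h]
  congr! 5 with y
  field_simp

lemma fourier_ofReal_eq_ofReal_re {b : ℝ → ℝ} (hb : b.Even) (t : ℝ) :
    𝓕 (fun y => (b y : ℂ)) t = ((𝓕 (fun y => (b y : ℂ)) t).re : ℂ) := by
  refine (Complex.conj_eq_iff_re.mp ?_).symm
  rw [Real.fourier_real_eq, ← integral_conj, ← integral_neg_eq_self]
  refine integral_congr_ae (ae_of_all _ fun y => ?_)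
  simp [Circle.smul_def, hb y, ← Complex.exp_conj, Real.fourierChar_apply,
    Complex.conj_ofNat]

lemma IsBandLimitedKernel.comp_mul {k : ℝ → ℝ} (hk : IsBandLimitedKernel k) {l : ℝ} (hl : 0 < l) :
    IsBandLimitedKernel fun t => l * k (l * t) where
  nonneg t := mul_nonneg hl.le (hk.nonneg _)
  integral_eq_one := by
    rw [integral_const_mul, Measure.integral_comp_mul_left, hk.integral_eq_one,
      abs_of_pos (inv_pos.mpr hl), smul_eq_mul, mul_one, mul_inv_cancel₀ hl.ne']
  exists_fourier_eq := by
    obtain ⟨φ, hφ, hsupp, hk⟩ := hk.exists_fourier_eq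
    refine ⟨fun y => φ (y / l), by fun_prop, ?_, fun t => ?_⟩
    · simpa only [smul_eq_mul, div_eq_inv_mul] using hsupp.comp_smul (inv_ne_zero hl.ne')
    · rw [fourier_comp_div φ hl, hk, Complex.ofReal_mul]

lemma isBandLimitedKernel_div_integral {k : ℝ → ℝ} (hk₀ : ∀ t, 0 ≤ k t) (hk : 0 < ∫ t, k t)
    {φ : ℝ → ℂ} (hφ : Continuous φ) (hsupp : HasCompactSupport φ) (hφk : ∀ t, 𝓕 φ t = k t) :
    IsBandLimitedKernel fun t => k t / ∫ t, k t where
  nonneg t := div_nonneg (hk₀ t) hk.le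
  integral_eq_one := by rw [integral_div, div_self hk.ne']
  exists_fourier_eq := by
    refine ⟨fun y => φ y / (∫ t, k t : ℝ), hφ.div_const _, ?_, fun t => ?_⟩
    · exact hsupp.comp_left (g := fun z => z / ((∫ t, k t : ℝ) : ℂ)) (zero_div _)
    · rw [Complex.ofReal_div, ← hφk, Real.fourier_real_eq, Real.fourier_real_eq, ← integral_div]
      simp only [Circle.smul_def, smul_eq_mul, mul_div_assoc]

lemma exists_isBandLimitedKernel : ∃ k, IsBandLimitedKernel k := by
  let b : ContDiffBump (0 : ℝ) := ⟨1, 2, one_pos, one_lt_two⟩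
  let ψ : ℝ → ℂ := fun y => b y
  have hsmooth : ContDiff ℝ ((⊤ : ℕ∞) : WithTop ℕ∞) ψ :=
    Complex.ofRealCLM.contDiff.comp (b.contDiff (n := (⊤ : ℕ∞)))
  have hsupp : HasCompactSupport ψ :=
    b.hasCompactSupport.comp_left (g := Complex.ofReal) Complex.ofReal_zero
  have hint : Integrable ψ := hsmooth.continuous.integrable_of_hasCompactSupport hsupp
  let Ψ : SchwartzMap ℝ ℂ := 𝓕 (hsupp.toSchwartzMap hsmooth)
  have hΨ : 𝓕 ψ = Ψ := (SchwartzMap.fourier_coe (hsupp.toSchwartzMap hsmooth)).symm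
  have hreal (t : ℝ) : 𝓕 ψ t = ((𝓕 ψ t).re : ℂ) := fourier_ofReal_eq_ofReal_re b.neg t
  have hzero : (𝓕 ψ 0).re = ∫ y, b y := by
    simp [Real.fourier_real_eq, ψ, integral_complex_ofReal]
  have hpos : 0 < ∫ t, (𝓕 ψ t).re ^ 2 := by
    refine integral_pos_of_integrable_nonneg_nonzero (x := 0) ?_ ?_ (fun t => sq_nonneg _) ?_
    · rw [hΨ]; exact (Complex.continuous_re.comp Ψ.continuous).pow 2
    · rw [hΨ]; exact (Ψ.memLp 2).re.integrable_sq
    · rw [hzero]; exact pow_ne_zero 2 b.integral_pos.ne'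
  refine ⟨_, isBandLimitedKernel_div_integral (fun t => sq_nonneg _) hpos
    (φ := convolution ψ ψ (ContinuousLinearMap.mul ℂ ℂ) volume) ?_ ?_ fun t => ?_⟩
  · exact hsupp.continuous_convolution_right _ hint.locallyIntegrable hsmooth.continuous
  · exact hsupp.convolution _ hsupp
  · rw [Real.fourier_mul_convolution_eq hint hint, Complex.ofReal_pow, ← hreal, sq]

lemma exists_isBandLimitedKernel_lt_integral {δ ε : ℝ} (hδ : 0 < δ) (hε : 0 < ε) :
    ∃ k, IsBandLimitedKernel k ∧ 1 - δ < ∫ t in Set.Ioc (-ε) ε, k t := by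
  obtain ⟨k, hk⟩ := exists_isBandLimitedKernel
  have hlim : Tendsto (fun M => ∫ t in (-M)..M, k t) atTop (𝓝 1) := hk.integral_eq_one ▸
    intervalIntegral_tendsto_integral hk.integrable tendsto_neg_atTop_atBot tendsto_id
  obtain ⟨M, hlt, hM⟩ :=
    ((hlim.eventually (lt_mem_nhds (sub_lt_self 1 hδ))).and (eventually_gt_atTop 0)).exists
  have hl : 0 < M / ε := div_pos hM hε
  refine ⟨_, hk.comp_mul hl, ?_⟩
  rw [← intervalIntegral.integral_of_le (by linarith), intervalIntegral.integral_const_mul,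
    intervalIntegral.mul_integral_comp_mul_left]
  rwa [mul_neg, div_mul_cancel₀ _ hε.ne']

end BandLimitedKernel

section Laplace

open MeasureTheory FourierTransform

/-- The Laplace transform `∫₀^∞ D(t) e^{-zt} dt`, with junk value `0` where the integrand is not
integrable. -/
noncomputable def laplace (D : ℝ → ℂ) (z : ℂ) : ℂ :=
  ∫ t in Set.Ioi (0 : ℝ), D t * Complex.exp (-z * t)

lemma integrableOn_mul_cexp_neg {D : ℝ → ℂ} {B : ℝ} (hD : Measurable D) (hDB : ∀ t, ‖D t‖ ≤ B)
    {z : ℂ} (hz : 0 < z.re) :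
    IntegrableOn (fun t : ℝ => D t * Complex.exp (-z * t)) (Set.Ioi 0) :=
  (integrableOn_exp_mul_complex_Ioi (by simpa using hz) 0).bdd_mul
    hD.aestronglyMeasurable (ae_of_all _ hDB)

lemma laplace_const (c : ℂ) {z : ℂ} (hz : 0 < z.re) : laplace (fun _ => c) z = c / z := by
  rw [laplace, integral_const_mul, integral_exp_mul_complex_Ioi (by simpa using hz)]
  simp [div_eq_mul_inv]

lemma laplace_sub {D E : ℝ → ℂ} {z : ℂ}
    (hD : IntegrableOn (fun t : ℝ => D t * Complex.exp (-z * t)) (Set.Ioi 0))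
    (hE : IntegrableOn (fun t : ℝ => E t * Complex.exp (-z * t)) (Set.Ioi 0)) :
    laplace (fun t => D t - E t) z = laplace D z - laplace E z := by
  simp only [laplace, sub_mul]
  exact integral_sub hD hE

lemma tendsto_laplace_nhdsGT_zero {f : ℝ → ℂ} (hf : IntegrableOn f (Set.Ioi 0)) :
    Tendsto (fun σ : ℝ => laplace f σ) (𝓝[>] 0) (𝓝 (∫ t in Set.Ioi 0, f t)) := by
  refine tendsto_integral_filter_of_dominated_convergence (fun t => ‖f t‖) ?_ ?_ hf.norm ?_
  · exact Eventually.of_forall fun σ =>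
      hf.aestronglyMeasurable.mul (Continuous.aestronglyMeasurable (by fun_prop))
  · filter_upwards [self_mem_nhdsWithin] with σ hσ
    refine (ae_restrict_mem measurableSet_Ioi).mono fun t ht => ?_
    rw [norm_mul, Complex.norm_exp]
    refine mul_le_of_le_one_right (norm_nonneg _) (Real.exp_le_one_iff.mpr ?_)
    simpa using (mul_pos hσ ht).le
  · refine ae_of_all _ fun t => ?_
    have hcont : Continuous fun σ : ℝ => f t * Complex.exp (-σ * t) := by fun_prop
    simpa using (hcont.tendsto 0).mono_left nhdsWithin_le_nhds

lemma fourier_indicator_mul_cexp_neg (D : ℝ → ℂ) (σ y : ℝ) :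
    𝓕 ((Set.Ioi (0 : ℝ)).indicator fun t => D t * Complex.exp (-σ * t)) y =
      laplace D (σ + 2 * Real.pi * y * Complex.I) := by
  rw [Real.fourier_real_eq, laplace, ← integral_indicator measurableSet_Ioi]
  congr 1 with t
  by_cases ht : t ∈ Set.Ioi (0 : ℝ)
  · rw [Set.indicator_of_mem ht, Set.indicator_of_mem ht, Circle.smul_def, smul_eq_mul,
      Real.fourierChar_apply, mul_left_comm, ← Complex.exp_add]
    congr 2
    push_cast
    ring
  · rw [Set.indicator_of_notMem ht, Set.indicator_of_notMem ht, smul_zero]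

lemma fourier_fourierChar_smul (φ : ℝ → ℂ) (u t : ℝ) :
    𝓕 (fun y => Real.fourierChar (y * u) • φ y) t = 𝓕 φ (t - u) := by
  simp only [Real.fourier_real_eq, smul_smul, ← AddChar.map_add_eq_mul]
  congr! 4 with y
  ring

lemma integral_mul_fourier_sub {f φ : ℝ → ℂ} (hf : Integrable f) (hφ : Integrable φ) (u : ℝ) :
    ∫ t, f t * 𝓕 φ (t - u) = ∫ y, 𝓕 f y * (Real.fourierChar (y * u) • φ y) := by
  have hφu : Integrable fun y : ℝ => Real.fourierChar (y * u) • φ y :=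
    hφ.norm.mono' ((by fun_prop : Continuous fun y : ℝ => Real.fourierChar (y * u)
      ).aestronglyMeasurable.smul hφ.aestronglyMeasurable)
      (ae_of_all _ fun y => (Circle.norm_smul _ _).le)
  have h := VectorFourier.integral_fourierIntegral_smul_eq_flip (L := innerₗ ℝ)
    Real.continuous_fourierChar continuous_inner hf hφu
  rw [flip_innerₗ] at h
  simp only [← fourier_fourierChar_smul]
  exact h.symm

-- Parseval on the line `re z = σ`, followed by `σ → 0⁺` on both sides.
lemma setIntegral_Ioi_mul_fourier_sub_eq {D : ℝ → ℂ} {B : ℝ} (hD : Measurable D)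
    (hDB : ∀ t, ‖D t‖ ≤ B) {G : ℂ → ℂ} (hG : ContinuousOn G {z | 0 ≤ z.re})
    (hDG : ∀ z : ℂ, 0 < z.re → laplace D z = G z) {φ : ℝ → ℂ} (hφ : Continuous φ)
    (hsupp : HasCompactSupport φ) (hφi : Integrable (𝓕 φ)) (u : ℝ) :
    ∫ t in Set.Ioi 0, D t * 𝓕 φ (t - u) =
      ∫ y : ℝ, G (2 * Real.pi * y * Complex.I) * (Real.fourierChar (y * u) • φ y) := by
  have hparseval (σ : ℝ) (hσ : 0 < σ) : laplace (fun t => D t * 𝓕 φ (t - u)) σ =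
      ∫ y : ℝ, G (σ + 2 * Real.pi * y * Complex.I) * (Real.fourierChar (y * u) • φ y) := by
    have hint := (integrable_indicator_iff measurableSet_Ioi).mpr
      (integrableOn_mul_cexp_neg hD hDB (z := σ) (by simpa using hσ))
    have h := integral_mul_fourier_sub hint (hφ.integrable_of_hasCompactSupport hsupp) u
    simp only [fourier_indicator_mul_cexp_neg] at h
    rw [laplace, ← integral_indicator measurableSet_Ioi]
    convert h using 2 with t
    · simp only [Set.indicator_apply, ite_mul, zero_mul, mul_right_comm]
    · exact funext fun y => by rw [hDG _ (by simpa using hσ)]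
  have hleft : Tendsto (fun σ : ℝ => laplace (fun t => D t * 𝓕 φ (t - u)) σ) (𝓝[>] 0)
      (𝓝 (∫ t in Set.Ioi 0, D t * 𝓕 φ (t - u))) :=
    tendsto_laplace_nhdsGT_zero
      ((hφi.comp_sub_right u).bdd_mul hD.aestronglyMeasurable (ae_of_all _ hDB)).integrableOn
  have hright : ContinuousOn (fun σ : ℝ =>
      ∫ y : ℝ, G (σ + 2 * Real.pi * y * Complex.I) * (Real.fourierChar (y * u) • φ y))
      (Set.Ici 0) := by
    refine continuousOn_integral_of_compact_support hsupp ?_ fun σ y _ hy => ?_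
    · refine ContinuousOn.mul (hG.comp (by fun_prop) fun p hp => ?_) (by fun_prop)
      simpa using hp.1
    · rw [image_eq_zero_of_notMem_tsupport hy, smul_zero, mul_zero]
  have hlim := ((hright 0 Set.self_mem_Ici).mono Set.Ioi_subset_Ici_self).tendsto.congr'
    (eventually_mem_nhdsWithin.mono fun σ hσ => (hparseval σ hσ).symm)
  simpa only [Complex.ofReal_zero, zero_add] using tendsto_nhds_unique hleft hlim

lemma tendsto_setIntegral_Ioi_mul_fourier_sub {D : ℝ → ℂ} {B : ℝ} (hD : Measurable D)
    (hDB : ∀ t, ‖D t‖ ≤ B) {G : ℂ → ℂ} (hG : ContinuousOn G {z | 0 ≤ z.re})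
    (hDG : ∀ z : ℂ, 0 < z.re → laplace D z = G z) {φ : ℝ → ℂ} (hφ : Continuous φ)
    (hsupp : HasCompactSupport φ) (hφi : Integrable (𝓕 φ)) :
    Tendsto (fun u => ∫ t in Set.Ioi 0, D t * 𝓕 φ (t - u)) atTop (𝓝 0) := by
  have hneg : Tendsto Neg.neg atTop (cocompact ℝ) :=
    tendsto_neg_atTop_atBot.mono_right atBot_le_cocompact
  refine ((Real.tendsto_integral_exp_smul_cocompact
    fun y : ℝ => G (2 * Real.pi * y * Complex.I) * φ y).comp hneg).congr fun u => ?_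
  rw [setIntegral_Ioi_mul_fourier_sub_eq hD hDB hG hDG hφ hsupp hφi, Function.comp_apply]
  simp only [mul_neg, neg_neg, mul_smul_comm]

lemma tendsto_integral_comp_add_mul_of_tendsto {D k : ℝ → ℂ} {B : ℝ} {c : ℂ} (hD : Measurable D)
    (hDB : ∀ t, ‖D t‖ ≤ B) (hlim : Tendsto D atTop (𝓝 c)) (hk : Integrable k) :
    Tendsto (fun u => ∫ v, D (u + v) * k v) atTop (𝓝 (c * ∫ v, k v)) := by
  rw [← integral_const_mul]
  refine tendsto_integral_filter_of_dominated_convergence (fun v => B * ‖k v‖) ?_ ?_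
    (hk.norm.const_mul B) (ae_of_all _ fun v => ?_)
  · exact Eventually.of_forall fun u =>
      (hD.comp (measurable_const_add u)).aestronglyMeasurable.mul hk.aestronglyMeasurable
  · refine Eventually.of_forall fun u => ae_of_all _ fun v => ?_
    rw [norm_mul]
    gcongr
    exact hDB _
  · exact (hlim.comp (tendsto_atTop_add_const_right _ v tendsto_id)).mul_const _

lemma IsBandLimitedKernel.tendsto_integral_comp_add_mul_zero {k : ℝ → ℝ}
    (hk : IsBandLimitedKernel k) {D : ℝ → ℂ} {B : ℝ} (hD : Measurable D)
    (hDB : ∀ t, ‖D t‖ ≤ B) {G : ℂ → ℂ} (hG : ContinuousOn G {z | 0 ≤ z.re})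
    (hDG : ∀ z : ℂ, 0 < z.re → laplace D z = G z) :
    Tendsto (fun u => ∫ v, D (u + v) * k v) atTop (𝓝 0) := by
  obtain ⟨φ, hφ, hsupp, hφk⟩ := hk.exists_fourier_eq
  have hki : Integrable fun v => (k v : ℂ) := hk.integrable.ofReal
  have hright := tendsto_setIntegral_Ioi_mul_fourier_sub hD hDB hG hDG hφ hsupp
    (by simpa only [funext hφk] using hki)
  have hleft : Tendsto (fun u => ∫ v, (Set.Iic 0).indicator D (u + v) * k v) atTop (𝓝 0) := by
    have hzero : Tendsto ((Set.Iic 0).indicator D) atTop (𝓝 0) :=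
      tendsto_const_nhds.congr' ((eventually_gt_atTop 0).mono fun t ht =>
        (Set.indicator_of_notMem (Set.notMem_Iic.mpr ht) D).symm)
    simpa only [zero_mul] using tendsto_integral_comp_add_mul_of_tendsto
      (hD.indicator measurableSet_Iic)
      (fun t => (norm_indicator_le_norm_self D t).trans (hDB t)) hzero hki
  refine (add_zero (0 : ℂ) ▸ hright.add hleft).congr fun u => ?_
  have hint : Integrable fun t => D t * k (t - u) :=
    (hki.comp_sub_right u).bdd_mul hD.aestronglyMeasurable (ae_of_all _ hDB)
  have hshift (E : ℝ → ℂ) : ∫ v, E (u + v) * k v = ∫ t, E t * k (t - u) := by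
    simpa only [add_sub_cancel_left] using integral_add_left_eq_self (fun t => E t * k (t - u)) u
  have hindicator : ∫ t, (Set.Iic 0).indicator D t * k (t - u) =
      ∫ t in Set.Iic 0, D t * k (t - u) := by
    rw [← integral_indicator measurableSet_Iic]
    simp only [Set.indicator_mul_left]
  simp only [hφk, hshift]
  rw [hindicator, ← Set.compl_Iic, add_comm]
  exact integral_add_compl measurableSet_Iic hint

lemma integrable_comp_add_mul {S k : ℝ → ℝ} {B : ℝ} (hS : Measurable S) (hSB : ∀ t, |S t| ≤ B)
    (hk : Integrable k) (u : ℝ) : Integrable fun v => S (u + v) * k v :=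
  hk.bdd_mul (hS.comp (measurable_const_add u)).aestronglyMeasurable
    (ae_of_all _ fun v => hSB (u + v))

lemma IsBandLimitedKernel.tendsto_integral_comp_add_mul_of_laplace_eq {k : ℝ → ℝ}
    (hk : IsBandLimitedKernel k) {S : ℝ → ℝ} {B c : ℝ} (hS : Measurable S)
    (hSB : ∀ t, |S t| ≤ B) {G : ℂ → ℂ} (hG : ContinuousOn G {z | 0 ≤ z.re})
    (hSG : ∀ z : ℂ, 0 < z.re → laplace (fun t => S t) z = G z + c / z) :
    Tendsto (fun u => ∫ v, S (u + v) * k v) atTop (𝓝 c) := by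
  have hSm : Measurable fun t => (S t : ℂ) := by fun_prop
  have hSB' (t : ℝ) : ‖(S t : ℂ)‖ ≤ B := by simpa using hSB t
  have hlaplace (z : ℂ) (hz : 0 < z.re) : laplace (fun t => (S t : ℂ) - c) z = G z := by
    rw [laplace_sub (integrableOn_mul_cexp_neg hSm hSB' hz)
      (integrableOn_mul_cexp_neg measurable_const (fun _ => le_rfl) hz), laplace_const _ hz,
      hSG z hz, add_sub_cancel_right]
  have hlim := hk.tendsto_integral_comp_add_mul_zero (hSm.sub_const (c : ℂ))
    (fun t => (norm_sub_le _ _).trans (add_le_add_left (hSB' t) _)) hG hlaplace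
  have hsub (u : ℝ) : ∫ v, ((S (u + v) : ℂ) - c) * k v =
      (((∫ v, S (u + v) * k v) - c : ℝ) : ℂ) := by
    have h := integral_sub (integrable_comp_add_mul hS hSB hk.integrable u)
      (hk.integrable.const_mul c)
    rw [integral_const_mul, hk.integral_eq_one, mul_one] at h
    rw [← h, ← integral_complex_ofReal]
    simp only [Complex.ofReal_sub, Complex.ofReal_mul, sub_mul]
  simp only [hsub] at hlim
  exact tendsto_sub_nhds_zero_iff.mp (by
    simpa only [Function.comp_def, Complex.ofReal_re, Complex.zero_re] using
      (Complex.continuous_re.tendsto 0).comp hlim)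

end Laplace

section Tauberian

open MeasureTheory

variable {S k : ℝ → ℝ} {B ε : ℝ}

lemma exp_neg_mul_le_of_monotone_exp_mul (hS : ∀ t, 0 ≤ S t)
    (hmono : Monotone fun t => Real.exp t * S t) {s t d : ℝ} (hst : s ≤ t) (htd : t ≤ s + d) :
    Real.exp (-d) * S s ≤ S t := by
  refine le_of_mul_le_mul_left ?_ (Real.exp_pos t)
  calc Real.exp t * (Real.exp (-d) * S s) = Real.exp (t - d) * S s := by
        rw [← mul_assoc, ← Real.exp_add, sub_eq_add_neg]
    _ ≤ Real.exp s * S s := by gcongr; exacts [hS s, by linarith]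
    _ ≤ Real.exp t * S t := hmono hst

lemma measurable_of_monotone_exp_mul (hmono : Monotone fun t => Real.exp t * S t) :
    Measurable S := by
  have h : S = fun t => Real.exp (-t) * (Real.exp t * S t) := by
    funext t
    rw [← mul_assoc, ← Real.exp_add, neg_add_cancel, Real.exp_zero, one_mul]
  rw [h]
  exact (Real.measurable_exp.comp measurable_neg).mul hmono.measurable

lemma mul_le_integral_comp_add_mul (hS₀ : ∀ t, 0 ≤ S t) (hSB : ∀ t, S t ≤ B)
    (hmono : Monotone fun t => Real.exp t * S t) (hk : IsBandLimitedKernel k)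
    (hkε : 1 - ε ≤ ∫ v in Set.Ioc (-ε) ε, k v) (u : ℝ) :
    Real.exp (-(2 * ε)) * S (u - ε) * (1 - ε) ≤ ∫ v, S (u + v) * k v := by
  have hint := integrable_comp_add_mul (measurable_of_monotone_exp_mul hmono)
    (fun t => (abs_of_nonneg (hS₀ t)).trans_le (hSB t)) hk.integrable u
  calc Real.exp (-(2 * ε)) * S (u - ε) * (1 - ε)
      ≤ Real.exp (-(2 * ε)) * S (u - ε) * ∫ v in Set.Ioc (-ε) ε, k v := by
        gcongr; exact mul_nonneg (Real.exp_pos _).le (hS₀ _)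
    _ = ∫ v in Set.Ioc (-ε) ε, Real.exp (-(2 * ε)) * S (u - ε) * k v :=
        (integral_const_mul _ _).symm
    _ ≤ ∫ v in Set.Ioc (-ε) ε, S (u + v) * k v := by
        refine setIntegral_mono_on (hk.integrable.integrableOn.const_mul _) hint.integrableOn
          measurableSet_Ioc fun v hv => mul_le_mul_of_nonneg_right ?_ (hk.nonneg v)
        exact exp_neg_mul_le_of_monotone_exp_mul hS₀ hmono (by linarith [hv.1]) (by linarith [hv.2])
    _ ≤ ∫ v, S (u + v) * k v :=
        setIntegral_le_integral hint (ae_of_all _ fun v => mul_nonneg (hS₀ _) (hk.nonneg v))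

lemma integral_comp_add_mul_le (hS₀ : ∀ t, 0 ≤ S t) (hSB : ∀ t, S t ≤ B)
    (hmono : Monotone fun t => Real.exp t * S t) (hk : IsBandLimitedKernel k)
    (hkε : 1 - ε ≤ ∫ v in Set.Ioc (-ε) ε, k v) (u : ℝ) :
    ∫ v, S (u + v) * k v ≤ Real.exp (2 * ε) * S (u + ε) + B * ε := by
  have hint := integrable_comp_add_mul (measurable_of_monotone_exp_mul hmono)
    (fun t => (abs_of_nonneg (hS₀ t)).trans_le (hSB t)) hk.integrable u
  have hmass := integral_add_compl (s := Set.Ioc (-ε) ε) measurableSet_Ioc hk.integrable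
  rw [hk.integral_eq_one] at hmass
  have hle_one : ∫ v in Set.Ioc (-ε) ε, k v ≤ 1 := hk.integral_eq_one ▸
    setIntegral_le_integral hk.integrable (ae_of_all _ hk.nonneg)
  have hin : ∫ v in Set.Ioc (-ε) ε, S (u + v) * k v ≤ Real.exp (2 * ε) * S (u + ε) :=
    calc ∫ v in Set.Ioc (-ε) ε, S (u + v) * k v
        ≤ ∫ v in Set.Ioc (-ε) ε, Real.exp (2 * ε) * S (u + ε) * k v := by
          refine setIntegral_mono_on hint.integrableOn (hk.integrable.integrableOn.const_mul _)
            measurableSet_Ioc fun v hv => mul_le_mul_of_nonneg_right ?_ (hk.nonneg v)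
          rw [← inv_mul_le_iff₀ (Real.exp_pos _), ← Real.exp_neg]
          exact exp_neg_mul_le_of_monotone_exp_mul hS₀ hmono (by linarith [hv.2])
            (by linarith [hv.1])
      _ = Real.exp (2 * ε) * S (u + ε) * ∫ v in Set.Ioc (-ε) ε, k v := integral_const_mul _ _
      _ ≤ Real.exp (2 * ε) * S (u + ε) :=
          mul_le_of_le_one_right (mul_nonneg (Real.exp_pos _).le (hS₀ _)) hle_one
  have hout : ∫ v in (Set.Ioc (-ε) ε)ᶜ, S (u + v) * k v ≤ B * ε :=
    calc ∫ v in (Set.Ioc (-ε) ε)ᶜ, S (u + v) * k v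
        ≤ ∫ v in (Set.Ioc (-ε) ε)ᶜ, B * k v :=
          setIntegral_mono_on hint.integrableOn (hk.integrable.integrableOn.const_mul _)
            measurableSet_Ioc.compl fun v _ => mul_le_mul_of_nonneg_right (hSB _) (hk.nonneg v)
      _ = B * ∫ v in (Set.Ioc (-ε) ε)ᶜ, k v := integral_const_mul _ _
      _ ≤ B * ε := by gcongr; exacts [(hS₀ 0).trans (hSB 0), by linarith]
  rw [← integral_add_compl measurableSet_Ioc hint]
  exact add_le_add hin hout

lemma tendsto_of_tendsto_integral_comp_add_mul {c : ℝ} (hS₀ : ∀ t, 0 ≤ S t)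
    (hSB : ∀ t, S t ≤ B) (hmono : Monotone fun t => Real.exp t * S t)
    (hlim : ∀ k, IsBandLimitedKernel k →
      Tendsto (fun u => ∫ v, S (u + v) * k v) atTop (𝓝 c)) :
    Tendsto S atTop (𝓝 c) := by
  have hsmooth {k : ℝ → ℝ} (hk : IsBandLimitedKernel k) (x : ℝ) :
      Tendsto (fun u => ∫ v, S (u + x + v) * k v) atTop (𝓝 c) :=
    (hlim k hk).comp (tendsto_atTop_add_const_right _ x tendsto_id)
  have hlower : Tendsto (fun ε => Real.exp (-(2 * ε)) * (c - B * ε)) (𝓝[>] 0) (𝓝 c) := by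
    have h : Continuous fun ε => Real.exp (-(2 * ε)) * (c - B * ε) := by fun_prop
    simpa using (h.tendsto 0).mono_left nhdsWithin_le_nhds
  have hupper : Tendsto (fun ε => Real.exp (2 * ε) * c / (1 - ε)) (𝓝[>] 0) (𝓝 c) := by
    have h : ContinuousAt (fun ε => Real.exp (2 * ε) * c / (1 - ε)) 0 :=
      ContinuousAt.div (by fun_prop) (by fun_prop) (by norm_num)
    simpa using h.tendsto.mono_left nhdsWithin_le_nhds
  have hsmall : ∀ᶠ ε : ℝ in 𝓝[>] 0, 0 < ε ∧ ε < 1 := Ioo_mem_nhdsGT one_pos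
  refine tendsto_order.mpr ⟨fun a ha => ?_, fun a ha => ?_⟩
  · obtain ⟨ε, hε, hε₀, -⟩ := ((hlower.eventually (lt_mem_nhds ha)).and hsmall).exists
    obtain ⟨k, hk, hkε⟩ := exists_isBandLimitedKernel_lt_integral hε₀ hε₀
    filter_upwards [(((hsmooth hk (-ε)).sub_const (B * ε)).const_mul
      (Real.exp (-(2 * ε)))).eventually (lt_mem_nhds hε)] with u hu
    refine hu.trans_le ?_
    rw [Real.exp_neg, inv_mul_le_iff₀ (Real.exp_pos _), sub_le_iff_le_add]
    simpa using integral_comp_add_mul_le hS₀ hSB hmono hk hkε.le (u + -ε)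
  · obtain ⟨ε, hε, hε₀, hε₁⟩ := ((hupper.eventually (gt_mem_nhds ha)).and hsmall).exists
    obtain ⟨k, hk, hkε⟩ := exists_isBandLimitedKernel_lt_integral hε₀ hε₀
    filter_upwards [(((hsmooth hk ε).const_mul (Real.exp (2 * ε))).div_const
      (1 - ε)).eventually (gt_mem_nhds hε)] with u hu
    refine lt_of_le_of_lt ?_ hu
    have h := mul_le_integral_comp_add_mul hS₀ hSB hmono hk hkε.le (u + ε)
    rw [add_sub_cancel_right, mul_assoc, Real.exp_neg, inv_mul_le_iff₀ (Real.exp_pos _)] at h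
    rwa [le_div_iff₀ (sub_pos.mpr hε₁)]

theorem tendsto_of_laplace_eq {c : ℝ} (hS₀ : ∀ t, 0 ≤ S t) (hSB : ∀ t, S t ≤ B)
    (hmono : Monotone fun t => Real.exp t * S t) {G : ℂ → ℂ}
    (hG : ContinuousOn G {z | 0 ≤ z.re})
    (hSG : ∀ z : ℂ, 0 < z.re → laplace (fun t => S t) z = G z + c / z) :
    Tendsto S atTop (𝓝 c) :=
  tendsto_of_tendsto_integral_comp_add_mul hS₀ hSB hmono fun _ hk =>
    hk.tendsto_integral_comp_add_mul_of_laplace_eq (measurable_of_monotone_exp_mul hmono)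
      (fun t => (abs_of_nonneg (hS₀ t)).trans_le (hSB t)) hG hSG

end Tauberian

section WienerIkehara

open MeasureTheory

/-- The summatory function `x ↦ ∑_{1 ≤ n ≤ x} a n` of a real variable `x`, whose Mellin transform is
the Dirichlet series of `a`. It is `0` for `x < 1`; in particular `⌊x⌋₊ = 0` for `x < 0`. -/
noncomputable def summatory (a : ℕ → ℝ) (x : ℝ) : ℝ :=
  ∑ n ∈ Finset.Icc 1 ⌊x⌋₊, a n

variable {a : ℕ → ℝ} {B : ℝ}

lemma summatory_natCast (a : ℕ → ℝ) (n : ℕ) : summatory a n = ∑ k ∈ Finset.Icc 1 n, a k := by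
  rw [summatory, Nat.floor_natCast]

lemma summatory_nonneg (ha : ∀ n, 0 ≤ a n) (x : ℝ) : 0 ≤ summatory a x :=
  Finset.sum_nonneg fun n _ => ha n

lemma monotone_summatory (ha : ∀ n, 0 ≤ a n) : Monotone (summatory a) := fun _ _ hxy =>
  Finset.sum_le_sum_of_subset_of_nonneg (Finset.Icc_subset_Icc_right (Nat.floor_le_floor hxy))
    fun n _ _ => ha n

lemma laplace_exp_neg_mul_summatory (ha : ∀ n, 0 ≤ a n)
    (hB : ∀ n : ℕ, ∑ k ∈ Finset.Icc 1 n, a k ≤ B * n) {z : ℂ} (hz : 0 < z.re) :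
    laplace (fun t => (Real.exp (-t) * summatory a (Real.exp t) : ℝ)) z =
      LSeries (fun n => a n) (1 + z) / (1 + z) := by
  have hre : 1 < (1 + z).re := by simpa using hz
  have hne : 1 + z ≠ 0 := fun h => by norm_num [h] at hre
  have hO : (fun n : ℕ => ∑ k ∈ Finset.Icc 1 n, a k) =O[atTop] fun n => (n : ℝ) ^ (1 : ℝ) := by
    refine .of_bound B (.of_forall fun n => ?_)
    rw [Real.norm_of_nonneg (Finset.sum_nonneg fun k _ => ha k), Real.rpow_one, Real.norm_natCast]
    exact hB n
  rw [LSeries_eq_mul_integral_of_nonneg a zero_le_one hre hO ha, mul_div_cancel_left₀ _ hne,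
    ← Real.exp_zero, ← integral_comp_exp_Ioi]
  refine integral_congr_ae (ae_of_all _ fun t => ?_)
  have hexp : ((Real.exp t : ℝ) : ℂ) ^ (-(1 + z + 1)) =
      Complex.exp (-t) * Complex.exp (-t) * Complex.exp (-z * t) := by
    rw [Complex.cpow_def_of_ne_zero (by simp), ← Complex.ofReal_log (Real.exp_pos t).le,
      Real.log_exp, ← Complex.exp_add, ← Complex.exp_add]
    ring_nf
  have hcancel : Complex.exp t * Complex.exp (-t) = 1 := by rw [← Complex.exp_add]; simp
  simp only [hexp, summatory, Complex.real_smul]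
  push_cast
  linear_combination (-(∑ k ∈ Finset.Icc 1 ⌊Real.exp t⌋₊, (a k : ℂ)) * Complex.exp (-t) *
    Complex.exp (-z * t)) * hcancel

lemma tendsto_exp_neg_mul_summatory (ha : ∀ n, 0 ≤ a n)
    (hB : ∀ n : ℕ, ∑ k ∈ Finset.Icc 1 n, a k ≤ B * n) {A : ℝ} {G : ℂ → ℂ}
    (hG : ContinuousOn G {s | 1 ≤ s.re})
    (hLG : ∀ s : ℂ, 1 < s.re → LSeries (fun n => a n) s = G s + A / (s - 1)) :
    Tendsto (fun t => Real.exp (-t) * summatory a (Real.exp t)) atTop (𝓝 A) := by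
  have hB₀ : 0 ≤ B := (ha 1).trans (by simpa using hB 1)
  have hcancel (t : ℝ) : Real.exp t * (Real.exp (-t) * summatory a (Real.exp t)) =
      summatory a (Real.exp t) := by
    rw [← mul_assoc, ← Real.exp_add, add_neg_cancel, Real.exp_zero, one_mul]
  have hne {z : ℂ} (hz : 0 ≤ z.re) : 1 + z ≠ 0 := fun h => by
    have := congrArg Complex.re h
    simp only [Complex.add_re, Complex.one_re, Complex.zero_re] at this
    linarith
  refine tendsto_of_laplace_eq (B := B) (G := fun z => (G (1 + z) - A) / (1 + z))
    (fun t => mul_nonneg (Real.exp_pos _).le (summatory_nonneg ha _)) (fun t => ?_) ?_ ?_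
    fun z hz => ?_
  · rw [Real.exp_neg, inv_mul_le_iff₀ (Real.exp_pos t), mul_comm]
    exact (hB _).trans (mul_le_mul_of_nonneg_left (Nat.floor_le (Real.exp_pos t).le) hB₀)
  · simp only [hcancel]
    exact (monotone_summatory ha).comp Real.exp_monotone
  · refine ((hG.comp (by fun_prop) fun z hz => ?_).sub continuousOn_const).div (by fun_prop)
      fun z hz => hne hz
    simpa using hz
  · have hz₀ : z ≠ 0 := fun h => by simp [h] at hz
    have hz₁ := hne hz.le
    rw [laplace_exp_neg_mul_summatory ha hB hz, hLG (1 + z) (by simpa using hz),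
      add_sub_cancel_left]
    field_simp
    ring

theorem tendsto_sum_div_of_LSeries_eq (ha : ∀ n, 0 ≤ a n)
    (hB : ∀ n : ℕ, ∑ k ∈ Finset.Icc 1 n, a k ≤ B * n) {A : ℝ} {G : ℂ → ℂ}
    (hG : ContinuousOn G {s | 1 ≤ s.re})
    (hLG : ∀ s : ℂ, 1 < s.re → LSeries (fun n => a n) s = G s + A / (s - 1)) :
    Tendsto (fun n : ℕ => (∑ k ∈ Finset.Icc 1 n, a k) / n) atTop (𝓝 A) := by
  refine ((tendsto_exp_neg_mul_summatory ha hB hG hLG).comp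
    (Real.tendsto_log_atTop.comp tendsto_natCast_atTop_atTop)).congr' ?_
  filter_upwards [eventually_gt_atTop 0] with n hn
  have hn' : (0 : ℝ) < n := Nat.cast_pos.mpr hn
  simp only [Function.comp_apply]
  rw [Real.exp_neg, Real.exp_log hn', summatory_natCast, inv_mul_eq_div]

end WienerIkehara

section PrimesInResidueClasses

open ArithmeticFunction Chebyshev
open scoped Finset

lemma tendsto_sum_residueClass_div {q : ℕ} [NeZero q] {a : ZMod q} (ha : IsUnit a) :
    Tendsto (fun n : ℕ => (∑ k ∈ Finset.Icc 1 n, vonMangoldt.residueClass a k) / n) atTop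
      (𝓝 (q.totient : ℝ)⁻¹) := by
  refine tendsto_sum_div_of_LSeries_eq (B := Real.log 4 + 4) (vonMangoldt.residueClass_nonneg a)
    (fun n => ?_) (vonMangoldt.continuousOn_LFunctionResidueClassAux a) fun s hs => ?_
  · calc ∑ k ∈ Finset.Icc 1 n, vonMangoldt.residueClass a k
        ≤ ∑ k ∈ Finset.Icc 1 n, Λ k :=
          Finset.sum_le_sum fun k _ => vonMangoldt.residueClass_le a k
      _ = ψ n := by rw [psi, Nat.floor_natCast]; rfl
      _ ≤ (Real.log 4 + 4) * n := psi_le_const_mul_self n.cast_nonneg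
  · rw [vonMangoldt.eqOn_LFunctionResidueClassAux ha hs]
    push_cast
    ring

lemma tendsto_sum_vonMangoldt_mem_div {q : ℕ} [NeZero q] {T : Finset (ZMod q)}
    (hT : ∀ a ∈ T, IsUnit a) :
    Tendsto (fun n : ℕ => (∑ k ∈ Finset.Icc 1 n with ((k : ℕ) : ZMod q) ∈ T, Λ k) / n)
      atTop (𝓝 (#T / q.totient)) := by
  have h := tendsto_finsetSum T fun a ha => tendsto_sum_residueClass_div (hT a ha)
  rw [Finset.sum_const, nsmul_eq_mul, ← div_eq_mul_inv] at h
  refine h.congr fun n => ?_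
  rw [← Finset.sum_div, Finset.sum_comm, Finset.sum_filter]
  simp only [vonMangoldt.residueClass, Set.indicator_apply, Set.mem_ofPred_eq, Finset.sum_ite_eq]

lemma tendsto_sum_vonMangoldt_div :
    Tendsto (fun n : ℕ => (∑ k ∈ Finset.Icc 1 n, Λ k) / n) atTop (𝓝 1) := by
  simpa only [Finset.mem_univ, Finset.filter_true, Finset.card_univ, ZMod.card, Nat.totient_one,
    Nat.cast_one, div_one] using tendsto_sum_vonMangoldt_mem_div (q := 1) (T := Finset.univ)
      fun a _ => isUnit_of_subsingleton a

lemma tendsto_psi_sub_theta_div : Tendsto (fun x => (ψ x - θ x) / x) atTop (𝓝 0) := by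
  have hsqrt : Real.sqrt =o[atTop] fun x : ℝ => x := by
    refine ((Asymptotics.isLittleO_pow_pow_atTop_of_lt one_lt_two).comp_tendsto
      Real.tendsto_sqrt_atTop).congr' (.of_forall fun x => pow_one _) ?_
    filter_upwards [eventually_ge_atTop 0] with x hx using Real.sq_sqrt hx
  exact (isBigO_psi_sub_theta_sqrt.trans_isLittleO hsqrt).tendsto_div_nhds_zero

lemma tendsto_primeCounting_mul_log_sub_theta_div :
    Tendsto (fun x : ℝ => (Nat.primeCounting ⌊x⌋₊ * Real.log x - θ x) / x) atTop (𝓝 0) := by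
  have hO : (fun x : ℝ => Nat.primeCounting ⌊x⌋₊ * Real.log x - θ x) =O[atTop]
      fun x => x * (Real.log x)⁻¹ := by
    refine (primeCounting_sub_theta_div_log_isBigO.mul
      (Asymptotics.isBigO_refl Real.log atTop)).congr' ?_ ?_ <;>
    · filter_upwards [eventually_gt_atTop 1] with x hx
      have := (Real.log_pos hx).ne'
      field_simp
  have ho : (fun x : ℝ => x * (Real.log x)⁻¹) =o[atTop] fun x => x := by
    simpa using (Asymptotics.isBigO_refl (fun x : ℝ => x) atTop).mul_isLittleO
      ((Asymptotics.isLittleO_one_iff ℝ).mpr Real.tendsto_log_atTop.inv_tendsto_atTop)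
  exact (hO.trans_isLittleO ho).tendsto_div_nhds_zero

section Counting

variable (P : ℕ → Prop) [DecidablePred P] (n : ℕ)

lemma sum_vonMangoldt_le_card_mul_log_add :
    ∑ k ∈ Finset.Icc 1 n with P k, Λ k ≤
      #{p ∈ n.primesLE | P p} * Real.log n + (ψ n - θ n) := by
  rw [← Finset.sum_filter_add_sum_filter_not _ Nat.Prime, Finset.filter_comm,
    ← Nat.primesLE_eq_filter_Icc_one, psi_sub_theta_eq_sum_not_prime, Nat.floor_natCast]
  refine add_le_add ?_ ?_
  · rw [← nsmul_eq_mul]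
    refine Finset.sum_le_card_nsmul _ _ _ fun p hp => ?_
    have hp := Nat.mem_primesLE.mp (Finset.mem_filter.mp hp).1
    rw [vonMangoldt_apply_prime hp.2]
    exact Real.log_le_log (mod_cast hp.2.pos) (mod_cast hp.1)
  · refine Finset.sum_le_sum_of_subset_of_nonneg ?_ fun _ _ _ => vonMangoldt_nonneg
    exact Finset.filter_subset_filter _ (Finset.filter_subset _ _)

lemma card_mul_log_le_sum_vonMangoldt_add :
    #{p ∈ n.primesLE | P p} * Real.log n ≤
      ∑ k ∈ Finset.Icc 1 n with P k, Λ k +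
        (Nat.primeCounting n * Real.log n - θ n) := by
  have hlog : ∑ p ∈ n.primesLE with P p, Real.log p ≤
      ∑ k ∈ Finset.Icc 1 n with P k, Λ k :=
    calc ∑ p ∈ n.primesLE with P p, Real.log p = ∑ p ∈ n.primesLE with P p, Λ p :=
          Finset.sum_congr rfl fun p hp => (vonMangoldt_apply_prime
            (Nat.prime_of_mem_primesLE (Finset.mem_filter.mp hp).1)).symm
      _ ≤ ∑ k ∈ Finset.Icc 1 n with P k, Λ k := by
          refine Finset.sum_le_sum_of_subset_of_nonneg (Finset.filter_subset_filter _ ?_)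
            fun _ _ _ => vonMangoldt_nonneg
          exact Nat.primesLE_eq_filter_Icc_one n ▸ Finset.filter_subset _ _
  have hdefect : ∑ p ∈ n.primesLE with P p, (Real.log n - Real.log p) ≤
      ∑ p ∈ n.primesLE, (Real.log n - Real.log p) := by
    refine Finset.sum_le_sum_of_subset_of_nonneg (Finset.filter_subset _ _) fun p hp _ => ?_
    have hp := Nat.mem_primesLE.mp hp
    exact sub_nonneg.mpr (Real.log_le_log (mod_cast hp.2.pos) (mod_cast hp.1))
  simp only [Finset.sum_sub_distrib, Finset.sum_const, nsmul_eq_mul,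
    Nat.primesLE_card_eq_primeCounting, ← theta_eq_sum_primesLE_log] at hdefect
  linarith

variable {P}

lemma tendsto_card_mul_log_div {d : ℝ}
    (h : Tendsto (fun n : ℕ => (∑ k ∈ Finset.Icc 1 n with P k, Λ k) / n) atTop (𝓝 d)) :
    Tendsto (fun n : ℕ => #{p ∈ n.primesLE | P p} * Real.log n / n) atTop (𝓝 d) := by
  have hlower := h.sub (tendsto_psi_sub_theta_div.comp tendsto_natCast_atTop_atTop)
  have hupper := h.add
    (tendsto_primeCounting_mul_log_sub_theta_div.comp tendsto_natCast_atTop_atTop)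
  rw [sub_zero] at hlower
  rw [add_zero] at hupper
  refine tendsto_of_tendsto_of_tendsto_of_le_of_le hlower hupper (fun n => ?_) fun n => ?_
  · simp only [Function.comp_apply]
    rw [← sub_div]
    gcongr
    exact sub_le_iff_le_add.mpr (sum_vonMangoldt_le_card_mul_log_add P n)
  · simp only [Function.comp_apply, Nat.floor_natCast]
    rw [← add_div]
    gcongr
    exact card_mul_log_le_sum_vonMangoldt_add P n

end Counting

/-- The primes satisfying `P` have natural density `d` within the set of all primes. Since primality
is built in, `P` may be any condition, for instance a congruence. -/
def HasPrimeDensity (P : ℕ → Prop) (d : ℝ) : Prop :=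
  Tendsto (fun x : ℕ => (Nat.card {p : ℕ // (p.Prime ∧ P p) ∧ p ≤ x} : ℝ) /
    (Nat.card {p : ℕ // p.Prime ∧ p ≤ x} : ℝ)) atTop (𝓝 d)

theorem hasPrimeDensity_of_tendsto_sum_vonMangoldt_div {P : ℕ → Prop} [DecidablePred P] {d : ℝ}
    (h : Tendsto (fun n : ℕ => (∑ k ∈ Finset.Icc 1 n with P k, Λ k) / n) atTop (𝓝 d)) :
    HasPrimeDensity P d := by
  have hall : Tendsto (fun n : ℕ => #n.primesLE * Real.log n / n) atTop (𝓝 1) := by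
    simpa using tendsto_card_mul_log_div (P := fun _ => True)
      (by simpa using tendsto_sum_vonMangoldt_div)
  have hratio := (tendsto_card_mul_log_div h).div hall one_ne_zero
  rw [div_one] at hratio
  refine hratio.congr' ?_
  filter_upwards [eventually_gt_atTop 1] with x hx
  have hlog : Real.log x ≠ 0 := (Real.log_pos (mod_cast hx)).ne'
  have hx₀ : (x : ℝ) ≠ 0 := by positivity
  have hcard : Nat.card {p : ℕ // p.Prime ∧ p ≤ x} = #x.primesLE :=
    Nat.subtype_card _ fun p => Nat.mem_primesLE.trans and_comm
  have hcardP : Nat.card {p : ℕ // (p.Prime ∧ P p) ∧ p ≤ x} = #{p ∈ x.primesLE | P p} :=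
    Nat.subtype_card _ fun p => by rw [Finset.mem_filter, Nat.mem_primesLE]; tauto
  rw [Pi.div_apply, hcard, hcardP, div_div_div_cancel_right₀ hx₀, mul_div_mul_right _ _ hlog]

theorem hasPrimeDensity_residue {q : ℕ} [NeZero q] {T : Finset (ZMod q)}
    (hT : ∀ a ∈ T, IsUnit a) :
    HasPrimeDensity (fun p => (p : ZMod q) ∈ T) (#T / q.totient) :=
  hasPrimeDensity_of_tendsto_sum_vonMangoldt_div (tendsto_sum_vonMangoldt_mem_div hT)

end PrimesInResidueClasses

theorem stmt16 :
    (∀ p : ℕ, p.Prime → p ≠ 2 →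
      (StablePrime (X ^ 2 - 2) p ↔ p % 8 = 3 ∨ p % 8 = 5)) ∧
    Tendsto (fun x : ℕ =>
      (Nat.card {p : ℕ // StablePrime (X ^ 2 - 2) p ∧ p ≤ x} : ℝ) /
        (Nat.card {p : ℕ // p.Prime ∧ p ≤ x} : ℝ)) atTop (𝓝 (1 / 2)) := by
  refine ⟨fun p hp _ => (stablePrime_X_sq_sub_two_iff p).trans (and_iff_right hp), ?_⟩
  have hmem (p : ℕ) : (p : ZMod 8) ∈ ({3, 5} : Finset (ZMod 8)) ↔ p % 8 = 3 ∨ p % 8 = 5 := by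
    simpa using or_congr (ZMod.natCast_eq_natCast_iff' p 3 8) (ZMod.natCast_eq_natCast_iff' p 5 8)
  have hratio : (({3, 5} : Finset (ZMod 8)).card / Nat.totient 8 : ℝ) = 1 / 2 := by
    rw [show ({3, 5} : Finset (ZMod 8)).card = 2 by decide, show Nat.totient 8 = 4 by decide]
    norm_num
  have hdensity := hasPrimeDensity_residue (T := ({3, 5} : Finset (ZMod 8))) (by decide)
  simp only [stablePrime_X_sq_sub_two_iff, ← hmem, ← hratio]
  exact hdensity
end
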